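/- arXiv:1610.05033 — 10 statements merged into one kernel-verified Lean document; each statement's English description precedes it below -/
import Mathlib

section
/- The kernel of the k-algebra homomorphism from the polynomial ring k[X,Y] to the product ring k[t] × k[t] × k[t] × k[t] determined by X ↦ (t, 0, t, λt) and Y ↦ (0, t, t, t) is the principal ideal generated by F = XY(X−Y)(X−λY). -/
theorem dvd_of_section {k : Type*} [Field k]
    (φ : MvPolynomial (Fin 2) k →ₐ[k] Polynomial k)
    (ψ : Polynomial k →ₐ[k] MvPolynomial (Fin 2) k) (z : MvPolynomial (Fin 2) k)
    (h : ∀ i, z ∣ MvPolynomial.X i - ψ (φ (MvPolynomial.X i)))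
    (p : MvPolynomial (Fin 2) k) (hp : φ p = 0) : z ∣ p := by
  let I := Ideal.span {z}
  have e : Ideal.Quotient.mkₐ k I = (Ideal.Quotient.mkₐ k I).comp (ψ.comp φ) := by
    apply MvPolynomial.algHom_ext
    intro i
    simp only [AlgHom.comp_apply, Ideal.Quotient.mkₐ_eq_mk]
    rw [Ideal.Quotient.eq, Ideal.mem_span_singleton]
    exact h i
  have e2 := DFunLike.congr_fun e p
  simp only [AlgHom.comp_apply, Ideal.Quotient.mkₐ_eq_mk, hp, map_zero] at e2
  rwa [Ideal.Quotient.eq_zero_iff_mem, Ideal.mem_span_singleton] at e2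

theorem dvd_of_aeval {k : Type*} [Field k] (a : k) (p : MvPolynomial (Fin 2) k)
    (hp : MvPolynomial.aeval (![Polynomial.C a * Polynomial.X, Polynomial.X] :
      Fin 2 → Polynomial k) p = 0) :
    MvPolynomial.X 0 - MvPolynomial.C a * MvPolynomial.X 1 ∣ p := by
  refine dvd_of_section _ (Polynomial.aeval (MvPolynomial.X 1)) _ ?_ p hp
  intro i
  fin_cases i <;> simp [MvPolynomial.algebraMap_eq]

theorem dvd_of_aeval' {k : Type*} [Field k] (p : MvPolynomial (Fin 2) k)
    (hp : MvPolynomial.aeval (![Polynomial.X, 0] : Fin 2 → Polynomial k) p = 0) :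
    MvPolynomial.X 1 ∣ p := by
  refine dvd_of_section _ (Polynomial.aeval (MvPolynomial.X 0)) _ ?_ p hp
  intro i
  fin_cases i <;> simp

/-- The kernel of the `k`-algebra homomorphism `k[X,Y] → k[t] × k[t] × k[t] × k[t]`
determined by `X ↦ (t, 0, t, λt)` and `Y ↦ (0, t, t, t)` is the principal ideal
generated by `F = XY(X−Y)(X−λY)`. -/
theorem stmt_0 {k : Type*} [Field k] (lam : k) (h0 : lam ≠ 0) (h1 : lam ≠ 1) :
    RingHom.ker (MvPolynomial.aeval
      (![![Polynomial.X, 0, Polynomial.X, Polynomial.C lam * Polynomial.X],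
         ![0, Polynomial.X, Polynomial.X, Polynomial.X]] :
        Fin 2 → Fin 4 → Polynomial k))
      = Ideal.span {(MvPolynomial.X 0 * MvPolynomial.X 1 *
          (MvPolynomial.X 0 - MvPolynomial.X 1) *
          (MvPolynomial.X 0 - MvPolynomial.C lam * MvPolynomial.X 1) :
          MvPolynomial (Fin 2) k)} := by
  have comp : ∀ (p : MvPolynomial (Fin 2) k) (j : Fin 4), MvPolynomial.aeval
      (![![Polynomial.X, 0, Polynomial.X, Polynomial.C lam * Polynomial.X],
         ![0, Polynomial.X, Polynomial.X, Polynomial.X]] :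
        Fin 2 → Fin 4 → Polynomial k) p j = MvPolynomial.aeval
      (fun i => (![![Polynomial.X, 0, Polynomial.X, Polynomial.C lam * Polynomial.X],
         ![0, Polynomial.X, Polynomial.X, Polynomial.X]] :
        Fin 2 → Fin 4 → Polynomial k) i j) p := by
    intro p j
    have : (Pi.evalAlgHom k (fun _ : Fin 4 => Polynomial k) j).comp (MvPolynomial.aeval
      (![![Polynomial.X, 0, Polynomial.X, Polynomial.C lam * Polynomial.X],
         ![0, Polynomial.X, Polynomial.X, Polynomial.X]] :
        Fin 2 → Fin 4 → Polynomial k)) = MvPolynomial.aeval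
      (fun i => (![![Polynomial.X, 0, Polynomial.X, Polynomial.C lam * Polynomial.X],
         ![0, Polynomial.X, Polynomial.X, Polynomial.X]] :
        Fin 2 → Fin 4 → Polynomial k) i j) := by
      apply MvPolynomial.algHom_ext
      intro i
      simp
    exact DFunLike.congr_fun this p
  have hX : (Polynomial.X : Polynomial k) ≠ 0 := Polynomial.X_ne_zero
  have hC : (Polynomial.C lam : Polynomial k) ≠ 0 := by simpa using h0
  have hC1 : (Polynomial.C lam * Polynomial.X - Polynomial.X : Polynomial k) ≠ 0 := by
    have : (Polynomial.C lam * Polynomial.X - Polynomial.X : Polynomial k)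
        = Polynomial.C (lam - 1) * Polynomial.X := by
      simp [sub_mul]
    rw [this]
    exact mul_ne_zero (Polynomial.C_ne_zero.mpr (sub_ne_zero.mpr h1)) hX
  ext p
  rw [RingHom.mem_ker, Ideal.mem_span_singleton]
  constructor
  · intro hp
    have H := fun j => (comp p j).symm.trans (congrFun hp j)
    have f0 : MvPolynomial.aeval (![Polynomial.X, 0] : Fin 2 → Polynomial k) p = 0 := by
      refine Eq.trans ?_ (H 0); congr 2; ext1 i; fin_cases i <;> rfl
    have f1 : MvPolynomial.aeval (![Polynomial.C 0 * Polynomial.X, Polynomial.X] :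
        Fin 2 → Polynomial k) p = 0 := by
      refine Eq.trans ?_ (H 1); congr 2; ext1 i; fin_cases i <;> simp
    have f2 : MvPolynomial.aeval (![Polynomial.C 1 * Polynomial.X, Polynomial.X] :
        Fin 2 → Polynomial k) p = 0 := by
      refine Eq.trans ?_ (H 2); congr 2; ext1 i; fin_cases i <;> simp
    have f3 : MvPolynomial.aeval (![Polynomial.C lam * Polynomial.X, Polynomial.X] :
        Fin 2 → Polynomial k) p = 0 := by
      refine Eq.trans ?_ (H 3); congr 2; ext1 i; fin_cases i <;> simp
    obtain ⟨q, rfl⟩ := dvd_of_aeval' p f0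
    have g1 := dvd_of_aeval 0 q (by simpa [hX] using f1)
    obtain ⟨r, rfl⟩ := g1
    have g2 := dvd_of_aeval 1 r (by simpa [hX] using f2)
    obtain ⟨s, rfl⟩ := g2
    have g3 := dvd_of_aeval lam s (by simpa [hX, hC, hC1, h0] using f3)
    obtain ⟨u, rfl⟩ := g3
    refine ⟨u, ?_⟩
    simp only [map_zero, map_one]
    ring
  · rintro ⟨u, rfl⟩
    ext1 j
    rw [comp]
    fin_cases j <;> simp [MvPolynomial.algebraMap_eq]
end

section
/- The quotient k-algebra k[X,Y]/(XY, (X−Y)(X−λY)) is a k-vector space of dimension 4. -/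
open MvPolynomial in
/-- Every polynomial is congruent to a combination of `1, X, Y, Y²`. -/
theorem stmt_4_span {k : Type*} [Field k] (lam : k) (h0 : lam ≠ 0) (p : MvPolynomial (Fin 2) k) :
    ∃ (a b c d : k) (u v : MvPolynomial (Fin 2) k),
      p = C a + C b * X 0 + C c * X 1 + C d * (X 1 * X 1) +
        (u * (X 0 * X 1) + v * ((X 0 - X 1) * (X 0 - C lam * X 1))) := by
  induction p using MvPolynomial.induction_on with
  | C a => exact ⟨a, 0, 0, 0, 0, 0, by simp⟩
  | add p q hp hq =>
    obtain ⟨a, b, c, d, u, v, hp⟩ := hp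
    obtain ⟨a', b', c', d', u', v', hq⟩ := hq
    refine ⟨a + a', b + b', c + c', d + d', u + u', v + v', ?_⟩
    simp only [C_add]
    linear_combination hp + hq
  | mul_X p i hp =>
    obtain ⟨a, b, c, d, u, v, hp⟩ := hp
    fin_cases i
    · refine ⟨0, a, 0, -(lam * b), u * X 0 + C b * (1 + C lam) + C c + C d * X 1,
        v * X 0 + C b, ?_⟩
      simp only [C_neg, C_mul, C_0, Fin.zero_eta]
      linear_combination hp * X 0
    · have hl : (C lam⁻¹ * C lam : MvPolynomial (Fin 2) k) = 1 := by
        rw [← C_mul, inv_mul_cancel₀ h0, C_1]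
      refine ⟨0, 0, a, c, u * X 1 + C b - C d * C lam⁻¹ * (X 0 - (1 + C lam) * X 1),
        v * X 1 + C d * C lam⁻¹ * X 1, ?_⟩
      simp only [C_0, Fin.mk_one]
      linear_combination hp * X 1 - C d * X 1 ^ 3 * hl

open MvPolynomial in
/-- The coordinate map. -/
noncomputable def stmt_4_L {k : Type*} [Field k] (lam : k) :
    MvPolynomial (Fin 2) k →ₗ[k] (Fin 4 → k) :=
  LinearMap.pi ![lcoeff k 0, lcoeff k (Finsupp.single 0 1), lcoeff k (Finsupp.single 1 1),
    lcoeff k (Finsupp.single 1 1 + Finsupp.single 1 1) -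
      lam • lcoeff k (Finsupp.single 0 1 + Finsupp.single 0 1)]

open MvPolynomial in
theorem stmt_4_L_ideal {k : Type*} [Field k] (lam : k) (u v : MvPolynomial (Fin 2) k) :
    stmt_4_L lam (u * (X 0 * X 1) + v * ((X 0 - X 1) * (X 0 - C lam * X 1))) = 0 := by
  have e : u * (X 0 * X 1) + v * ((X 0 - X 1) * (X 0 - C lam * X 1)) =
      u * X 0 * X 1 + (v * X 0 * X 0 - C (1 + lam) * (v * X 0 * X 1) + C lam * (v * X 1 * X 1)) := by
    simp only [C_add, C_1]; ring
  rw [e]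
  generalize 1 + lam = m
  ext i
  fin_cases i <;>
    simp [stmt_4_L, coeff_mul_X', coeff_C_mul, Finsupp.single_apply]

open MvPolynomial in
theorem stmt_4_L_s {k : Type*} [Field k] (lam a b c d : k) :
    stmt_4_L lam (C a + C b * X 0 + C c * X 1 + C d * (X 1 * X 1)) = ![a, b, c, d] := by
  have e : (C a + C b * X 0 + C c * X 1 + C d * (X 1 * X 1) : MvPolynomial (Fin 2) k) =
    C a + C b * X 0 + C c * X 1 + C d * X 1 * X 1 := by ring
  rw [e]
  ext i
  fin_cases i <;>
    simp [stmt_4_L, coeff_mul_X', coeff_C, Finsupp.single_apply, Finsupp.ext_iff, Fin.forall_fin_two]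

/-- The quotient `k`-algebra `k[X,Y]/(XY, (X−Y)(X−λY))` is a `k`-vector space of
dimension 4. -/
theorem stmt_4 {k : Type*} [Field k] (lam : k) (h0 : lam ≠ 0) (h1 : lam ≠ 1) :
    Module.finrank k (MvPolynomial (Fin 2) k ⧸
      Ideal.span {(MvPolynomial.X 0 * MvPolynomial.X 1 : MvPolynomial (Fin 2) k),
        (MvPolynomial.X 0 - MvPolynomial.X 1) *
          (MvPolynomial.X 0 - MvPolynomial.C lam * MvPolynomial.X 1)}) = 4 := by
  set I := Ideal.span {(MvPolynomial.X 0 * MvPolynomial.X 1 : MvPolynomial (Fin 2) k),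
        (MvPolynomial.X 0 - MvPolynomial.X 1) *
          (MvPolynomial.X 0 - MvPolynomial.C lam * MvPolynomial.X 1)} with hI
  have hker : I.restrictScalars k = LinearMap.ker (stmt_4_L lam) := by
    ext p
    rw [Submodule.restrictScalars_mem, LinearMap.mem_ker, hI, Ideal.mem_span_pair]
    constructor
    · rintro ⟨u, v, rfl⟩
      exact stmt_4_L_ideal lam u v
    · intro hp
      obtain ⟨a, b, c, d, u, v, h⟩ := stmt_4_span lam h0 p
      rw [h, map_add, stmt_4_L_s, stmt_4_L_ideal, add_zero] at hp
      have ha : a = 0 := congrFun hp 0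
      have hb : b = 0 := congrFun hp 1
      have hc : c = 0 := congrFun hp 2
      have hd : d = 0 := congrFun hp 3
      refine ⟨u, v, ?_⟩
      rw [h, ha, hb, hc, hd]
      simp
  have hsurj : Function.Surjective (stmt_4_L lam) := fun f =>
    ⟨_, (stmt_4_L_s lam (f 0) (f 1) (f 2) (f 3)).trans (by ext i; fin_cases i <;> rfl)⟩
  have e1 := (Submodule.Quotient.restrictScalarsEquiv k I).symm.finrank_eq
  have e2 := (Submodule.quotEquivOfEq _ _ hker).finrank_eq
  have e3 := ((stmt_4_L lam).quotKerEquivOfSurjective hsurj).finrank_eq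
  have e4 : Module.finrank k (Fin 4 → k) = 4 := by simp
  exact e1.trans (e2.trans (e3.trans e4))
end

section
/- Let R = k[X,Y]/(F), and let R₁ = R/(z₁R) and R₃ = R/(z₃R) (quotients by the images of z₁ = Y and z₃ = X − Y). Then the R-module Ext¹_R(R₁, R₃) is a 1-dimensional k-vector space. -/
open CategoryTheory

section Aux
variable {k R : Type} [Field k] [CommRing R] [Algebra k R]

noncomputable def mulHom (a : R) : ModuleCat.of R R ⟶ ModuleCat.of R R :=
  ModuleCat.ofHom (LinearMap.mulLeft R a)

lemma mulHom_comp (a b : R) (h : a * b = 0) : mulHom a ≫ mulHom b = 0 := by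
  ext
  simpa [mulHom, mul_comm] using h

noncomputable def cplx (y w : R) (h : y * w = 0) : ChainComplex (ModuleCat R) ℕ :=
  HomologicalComplex.alternatingConst (ModuleCat.of R R) (φ := mulHom w) (ψ := mulHom y)
    (mulHom_comp _ _ (by rw [mul_comm]; exact h)) (mulHom_comp _ _ h)
    (fun _ _ => ComplexShape.down_nat_odd_add)

lemma cplx_d_odd (y w : R) (h : y * w = 0) (n : ℕ) (hn : ¬ Even (n + 1)) :
    (cplx y w h).d (n + 1) n = mulHom y := by
  simp [cplx, HomologicalComplex.alternatingConst, hn]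

lemma cplx_d_even (y w : R) (h : y * w = 0) (n : ℕ) (hn : Even (n + 1)) :
    (cplx y w h).d (n + 1) n = mulHom w := by
  simp [cplx, HomologicalComplex.alternatingConst, hn]

noncomputable def piHom (y : R) : ModuleCat.of R R ⟶ ModuleCat.of R (R ⧸ Ideal.span {y}) :=
  ModuleCat.ofHom (Submodule.mkQ _)

lemma mulHom_piHom (y : R) : mulHom y ≫ piHom y = 0 := by
  ext
  simp [mulHom, piHom]

noncomputable def cplxπ (y w : R) (h : y * w = 0) :
    cplx y w h ⟶ (ChainComplex.single₀ _).obj (ModuleCat.of R (R ⧸ Ideal.span {y})) :=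
  ((cplx y w h).toSingle₀Equiv _).symm
    ⟨piHom y, by rw [cplx_d_odd _ _ _ _ (by simp)]; exact mulHom_piHom y⟩

lemma cplx_quasiIso (y w : R) (h : y * w = 0) (hy : ∀ r, y * r = 0 → ∃ s, r = w * s)
    (hw : ∀ r, w * r = 0 → ∃ s, r = y * s) : QuasiIso (cplxπ y w h) where
  quasiIsoAt m := by
    induction m with
    | zero =>
      rw [ChainComplex.quasiIsoAt₀_iff, ShortComplex.quasiIso_iff_of_zeros' _ rfl rfl rfl]
      have hπ : (cplxπ y w h).f 0 = piHom y :=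
        ChainComplex.toSingle₀Equiv_symm_apply_f_zero _ _
      constructor
      · rw [ShortComplex.moduleCat_exact_iff]
        intro (x : R) hx
        have hx' : (cplxπ y w h).f 0 x = 0 := hx
        rw [hπ] at hx'
        have hx2 : (Ideal.Quotient.mk (Ideal.span {y}) x) = 0 := hx'
        rw [Ideal.Quotient.eq_zero_iff_mem, Ideal.mem_span_singleton] at hx2
        obtain ⟨s, hs⟩ := hx2
        have : (cplx y w h).d 1 0 s = x := by
          rw [cplx_d_odd _ _ _ _ (by decide)]
          exact hs.symm
        exact ⟨s, this⟩
      · change Epi ((cplxπ y w h).f 0)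
        rw [hπ]
        exact (ModuleCat.epi_iff_surjective _).2 (Submodule.mkQ_surjective _)
    | succ m _ =>
      rw [quasiIsoAt_iff_exactAt' (hL := ChainComplex.exactAt_succ_single_obj ..),
          HomologicalComplex.exactAt_iff' _ (m + 2) (m + 1) m (by simp) (by simp)]
      rw [ShortComplex.moduleCat_exact_iff]
      intro (x : R) hx
      have hx' : (cplx y w h).d (m + 1) m x = 0 := hx
      suffices ∃ s : R, (cplx y w h).d (m + 1 + 1) (m + 1) s = x from this
      by_cases hm : Even (m + 1)
      · rw [cplx_d_even y w h m hm] at hx'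
        rw [cplx_d_odd y w h (m+1) (by rw [Nat.even_add_one]; simpa using hm)]
        obtain ⟨s, hs⟩ := hw x hx'
        exact ⟨s, hs.symm⟩
      · rw [cplx_d_odd y w h m hm] at hx'
        rw [cplx_d_even y w h (m+1) (by rw [Nat.even_add_one]; simpa using hm)]
        obtain ⟨s, hs⟩ := hy x hx'
        exact ⟨s, hs.symm⟩

noncomputable def res (y w : R) (h : y * w = 0) (hy : ∀ r, y * r = 0 → ∃ s, r = w * s)
    (hw : ∀ r, w * r = 0 → ∃ s, r = y * s) :
    ProjectiveResolution (ModuleCat.of R (R ⧸ Ideal.span {y})) where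
  complex := cplx y w h
  projective _ := inferInstanceAs <| Projective (ModuleCat.of R R)
  π := cplxπ y w h
  quasiIso := cplx_quasiIso y w h hy hw

lemma homology_finrank (S : ShortComplex (ModuleCat k)) (hg : S.g = 0)
    (e : S.X₂ →ₗ[k] k) (he : Function.Surjective e)
    (hk : ∀ x, e x = 0 ↔ ∃ z, S.f z = x) : Module.finrank k S.homology = 1 := by
  rw [S.moduleCatHomologyIso.toLinearEquiv.finrank_eq]
  let e' : LinearMap.ker S.g.hom →ₗ[k] k := e.comp (Submodule.subtype _)
  have he' : Function.Surjective e' := fun c => by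
    obtain ⟨x, hx⟩ := he c
    exact ⟨⟨x, by simp [hg]⟩, hx⟩
  have hk' : LinearMap.range S.moduleCatToCycles = LinearMap.ker e' := by
    ext x
    rw [LinearMap.mem_ker]
    change _ ↔ e x.1 = 0
    rw [hk]
    simp only [LinearMap.mem_range, Subtype.ext_iff]
    rfl
  have := ((Submodule.quotEquivOfEq _ _ hk').trans (e'.quotKerEquivOfSurjective he')).finrank_eq
  rw [Module.finrank_self] at this
  exact this

lemma ext_finrank (y w : R) (h : y * w = 0) (hy : ∀ r, y * r = 0 → ∃ s, r = w * s)
    (hw : ∀ r, w * r = 0 → ∃ s, r = y * s) (N : ModuleCat.{0} R) (hN : ∀ n : N, w • n = 0)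
    (e : N →+ k) (hc : ∀ (c : k) (n : N), e (algebraMap k R c • n) = c * e n)
    (he : Function.Surjective e) (hk : ∀ n, e n = 0 ↔ ∃ m : N, y • m = n) :
    Module.finrank k (((Ext k (ModuleCat R) 1).obj
          (Opposite.op (ModuleCat.of R (R ⧸ Ideal.span {y})))).obj N) = 1 := by
  rw [((res y w h hy hw).isoExt (R := k) 1 N).toLinearEquiv.finrank_eq]
  let K := (res y w h hy hw).complex.linearYonedaObj k N
  have iso : K.homology 1 ≅ (K.sc' 0 1 2).homology :=
    ShortComplex.homologyMapIso (K.isoSc' 0 1 2 (by simp) (by simp))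
  rw [iso.toLinearEquiv.finrank_eq]
  let ev : (ModuleCat.of R R ⟶ N) →ₗ[k] k :=
    { toFun := fun φ => e (φ (1 : R))
      map_add' := fun φ ψ => by simp
      map_smul' := fun c φ => hc c _ }
  refine homology_finrank (K.sc' 0 1 2) ?_ ev ?_ ?_
  · ext (φ : ModuleCat.of R R ⟶ N)
    change (cplx y w h).d 2 1 ≫ φ = 0
    rw [cplx_d_even _ _ _ _ (by decide)]
    ext
    change φ (w * 1 : R) = 0
    have := φ.hom.map_smul w (1 : R)
    exact this.trans (hN _)
  · intro c
    obtain ⟨n, hn⟩ := he c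
    refine ⟨ModuleCat.ofHom (LinearMap.toSpanSingleton R N n), ?_⟩
    change e ((1 : R) • n) = c
    rw [one_smul, hn]
  · intro (φ : ModuleCat.of R R ⟶ N)
    change e _ = 0 ↔ ∃ ψ : ModuleCat.of R R ⟶ N, (cplx y w h).d 1 0 ≫ ψ = φ
    rw [cplx_d_odd _ _ _ _ (by decide), hk]
    constructor
    · rintro ⟨m, hm⟩
      refine ⟨ModuleCat.ofHom (LinearMap.toSpanSingleton R N m), ?_⟩
      ext
      change (y * 1 : R) • m = φ (1 : R)
      rw [mul_one, hm]
    · rintro ⟨ψ, rfl⟩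
      exact ⟨ψ (1 : R), (ψ.hom.map_smul y (1 : R)).symm⟩

lemma quot_ann {P : Type} [CommRing P] [IsDomain P] (F a b : P) (hF : F = a * b) (ha : a ≠ 0)
    (r : P ⧸ Ideal.span {F}) (hr : Ideal.Quotient.mk _ a * r = 0) :
    ∃ s, r = Ideal.Quotient.mk _ b * s := by
  obtain ⟨r, rfl⟩ := Ideal.Quotient.mk_surjective r
  rw [← map_mul, Ideal.Quotient.eq_zero_iff_mem, Ideal.mem_span_singleton, hF] at hr
  obtain ⟨s, hs⟩ := (mul_dvd_mul_iff_left ha).1 hr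
  exact ⟨Ideal.Quotient.mk _ s, by rw [← map_mul, hs]⟩

open MvPolynomial in
lemma poly_decomp (p : MvPolynomial (Fin 2) k) : ∃ m q : MvPolynomial (Fin 2) k,
    p = C (constantCoeff p) + X 1 * m + (X 0 - X 1) * q := by
  induction p using MvPolynomial.induction_on with
  | C a => exact ⟨0, 0, by simp⟩
  | add p q hp hq =>
    obtain ⟨m, q1, h1⟩ := hp
    obtain ⟨m', q', h2⟩ := hq
    refine ⟨m + m', q1 + q', ?_⟩
    rw [map_add, map_add]
    linear_combination h1 + h2
  | mul_X p i _ =>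
    fin_cases i
    · exact ⟨p, p, by simp; ring⟩
    · exact ⟨p, 0, by simp; ring⟩

end Aux


/-- Let `R = k[X,Y]/(F)`, `R₁ = R/z₁R` and `R₃ = R/z₃R` (with `z₁ = Y`, `z₃ = X − Y`).
Then `Ext¹_R(R₁, R₃)` is a 1-dimensional `k`-vector space. -/
theorem stmt_5 {k : Type} [Field k] (lam : k) (h0 : lam ≠ 0) (h1 : lam ≠ 1)
    (F : MvPolynomial (Fin 2) k)
    (hF : F = MvPolynomial.X 0 * MvPolynomial.X 1 *
      (MvPolynomial.X 0 - MvPolynomial.X 1) *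
      (MvPolynomial.X 0 - MvPolynomial.C lam * MvPolynomial.X 1)) :
    letI R := MvPolynomial (Fin 2) k ⧸ Ideal.span {F}
    letI z1 : R := Ideal.Quotient.mk _ (MvPolynomial.X 1)
    letI z3 : R := Ideal.Quotient.mk _ (MvPolynomial.X 0 - MvPolynomial.X 1)
    Module.finrank k
      (((Ext k (ModuleCat R) 1).obj
          (Opposite.op (ModuleCat.of R (R ⧸ Ideal.span {z1})))).obj
        (ModuleCat.of R (R ⧸ Ideal.span {z3}))) = 1 := by
  let R := MvPolynomial (Fin 2) k ⧸ Ideal.span {F}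
  let z1 : R := Ideal.Quotient.mk _ (MvPolynomial.X 1)
  let z3 : R := Ideal.Quotient.mk _ (MvPolynomial.X 0 - MvPolynomial.X 1)
  set W : MvPolynomial (Fin 2) k := MvPolynomial.X 0 *
      (MvPolynomial.X 0 - MvPolynomial.X 1) *
      (MvPolynomial.X 0 - MvPolynomial.C lam * MvPolynomial.X 1) with hW
  have hF1 : F = MvPolynomial.X 1 * W := by rw [hF, hW]; ring
  have hW0 : W ≠ 0 := by
    intro h
    have := congrArg (MvPolynomial.eval (![1, 0] : Fin 2 → k)) h
    simp [hW] at this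
  let w : R := Ideal.Quotient.mk _ W
  have hzw : z1 * w = 0 := by
    change Ideal.Quotient.mk _ _ * Ideal.Quotient.mk _ _ = 0
    rw [← map_mul, ← hF1, Ideal.Quotient.eq_zero_iff_mem]
    exact Ideal.mem_span_singleton_self F
  let c1 : R →+* k := Ideal.Quotient.lift (Ideal.span {F}) MvPolynomial.constantCoeff (by
    intro a ha
    obtain ⟨b, rfl⟩ := Ideal.mem_span_singleton.1 ha
    simp [hF])
  let c2 : R ⧸ Ideal.span {z3} →+* k := Ideal.Quotient.lift (Ideal.span {z3}) c1 (by
    intro a ha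
    obtain ⟨b, rfl⟩ := Ideal.mem_span_singleton.1 ha
    rw [map_mul]
    have : c1 z3 = 0 := by
      change MvPolynomial.constantCoeff (MvPolynomial.X 0 - MvPolynomial.X 1 : MvPolynomial (Fin 2) k) = 0
      simp
    rw [this, zero_mul])
  have hz3' : ∀ a b : R, Ideal.Quotient.mk (Ideal.span {z3}) (a + z3 * b) =
      Ideal.Quotient.mk (Ideal.span {z3}) a := by
    intro a b
    rw [Ideal.Quotient.eq, add_sub_cancel_left]
    exact Ideal.mul_mem_right _ _ (Ideal.mem_span_singleton_self z3)
  refine ext_finrank z1 w hzw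
    (quot_ann F _ W hF1 (MvPolynomial.X_ne_zero 1))
    (quot_ann F W _ (by rw [hF1, mul_comm]) hW0)
    (ModuleCat.of R (R ⧸ Ideal.span {z3})) ?_ c2.toAddMonoidHom ?_ ?_ ?_
  · intro n
    obtain ⟨n, rfl⟩ := Ideal.Quotient.mk_surjective n
    change Ideal.Quotient.mk (Ideal.span {z3}) (w * n) = 0
    have : w = z3 * Ideal.Quotient.mk _ (MvPolynomial.X 0 *
        (MvPolynomial.X 0 - MvPolynomial.C lam * MvPolynomial.X 1)) := by
      change Ideal.Quotient.mk _ _ = Ideal.Quotient.mk _ _ * Ideal.Quotient.mk _ _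
      rw [← map_mul, hW]
      congr 1
      ring
    rw [this, mul_assoc, Ideal.Quotient.eq_zero_iff_mem]
    exact Ideal.mul_mem_right _ _ (Ideal.mem_span_singleton_self z3)
  · intro c n
    obtain ⟨n, rfl⟩ := Ideal.Quotient.mk_surjective n
    change c1 (algebraMap k R c * n) = c * c1 n
    rw [map_mul]
    congr 1
    exact MvPolynomial.constantCoeff_C _ c
  · intro c
    exact ⟨Ideal.Quotient.mk _ (Ideal.Quotient.mk _ (MvPolynomial.C c)),
      MvPolynomial.constantCoeff_C _ c⟩
  · intro n
    obtain ⟨n, rfl⟩ := Ideal.Quotient.mk_surjective n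
    constructor
    · intro h
      obtain ⟨p, rfl⟩ := Ideal.Quotient.mk_surjective n
      have h' : MvPolynomial.constantCoeff p = 0 := h
      obtain ⟨m, q, hp⟩ := poly_decomp p
      rw [h', map_zero, zero_add] at hp
      refine ⟨Ideal.Quotient.mk _ (Ideal.Quotient.mk _ m), ?_⟩
      change Ideal.Quotient.mk (Ideal.span {z3}) (z1 * Ideal.Quotient.mk _ m) = _
      rw [hp, map_add, map_mul, map_mul]
      change _ = Ideal.Quotient.mk (Ideal.span {z3})
        (z1 * Ideal.Quotient.mk _ m + z3 * Ideal.Quotient.mk _ q)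
      exact (hz3' _ _).symm
    · rintro ⟨m, hm⟩
      obtain ⟨m, rfl⟩ := Ideal.Quotient.mk_surjective m
      rw [← hm]
      change c1 (z1 * m) = 0
      have : c1 z1 = 0 := MvPolynomial.constantCoeff_X _ _
      rw [map_mul, this, zero_mul]
end

section
/- Let R = k[X,Y]/(F), and let R₁ = R/(z₁R) and R₃₄ = R/(z₃z₄R) (quotients by the images of z₁ = Y and z₃z₄ = (X−Y)(X−λY)). Then the R-module Ext¹_R(R₁, R₃₄) is a 2-dimensional k-vector space. -/
open CategoryTheory

namespace Stmt6Aux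

section res
variable {R : Type} [CommRing R] (a b : R) (hab : a * b = 0)

/-- multiplication by `a` on `R` as a morphism -/
noncomputable def mulHom (a : R) : ModuleCat.of R R ⟶ ModuleCat.of R R :=
  ModuleCat.ofHom (LinearMap.mulLeft R a)

lemma mulHom_comp (a b : R) (hab : a * b = 0) : mulHom a ≫ mulHom b = 0 := by
  apply ModuleCat.hom_ext
  ext
  simp [mulHom, mul_comm b a, hab]

/-- the periodic complex -/
noncomputable def cpx : ChainComplex (ModuleCat.{0} R) ℕ :=
  HomologicalComplex.alternatingConst (ModuleCat.of R R) (φ := mulHom b) (ψ := mulHom a)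
    (mulHom_comp b a (by rw [mul_comm, hab])) (mulHom_comp a b hab)
    fun _ _ => ComplexShape.down_nat_odd_add

lemma cpx_d10 : (cpx a b hab).d 1 0 = mulHom a := by
  simp [cpx, HomologicalComplex.alternatingConst]

lemma cpx_d21 : (cpx a b hab).d 2 1 = mulHom b := by
  simp [cpx, HomologicalComplex.alternatingConst]

/-- augmentation -/
noncomputable def aug : ModuleCat.of R R ⟶ ModuleCat.of R (R ⧸ Ideal.span {a}) :=
  ModuleCat.ofHom (Submodule.mkQ (Ideal.span {a}))

/-- augmentation as chain map -/
noncomputable def cpxπ : cpx a b hab ⟶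
    (ChainComplex.single₀ _).obj (ModuleCat.of R (R ⧸ Ideal.span {a})) :=
  ((cpx a b hab).toSingle₀Equiv _).symm ⟨aug a, by
    rw [cpx_d10]
    apply ModuleCat.hom_ext
    apply LinearMap.ext_ring
    change Submodule.Quotient.mk (p := Ideal.span {a}) (a * (1 : R)) = 0
    rw [mul_one]
    exact (Submodule.Quotient.mk_eq_zero _).2 (Ideal.mem_span_singleton_self a)⟩

lemma exact_mk (ha : ∀ x, b * x = 0 → a ∣ x) (h : mulHom a ≫ mulHom b = 0) :
    (ShortComplex.mk (mulHom a) (mulHom b) h).Exact := by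
  rw [ShortComplex.moduleCat_exact_iff]
  intro x hx
  obtain ⟨y, hy⟩ := ha x hx
  exact ⟨y, hy.symm⟩

lemma cpx_quasiIso (ha : ∀ x, b * x = 0 → a ∣ x) (hb : ∀ x, a * x = 0 → b ∣ x) :
    QuasiIso (cpxπ a b hab) where
  quasiIsoAt m := by
    rcases m with _ | m
    · rw [ChainComplex.quasiIsoAt₀_iff, ShortComplex.quasiIso_iff_of_zeros' _ rfl rfl rfl]
      constructor
      · rw [ShortComplex.moduleCat_exact_iff]
        intro x hx
        obtain ⟨y, hy⟩ := Ideal.mem_span_singleton.1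
          ((Submodule.Quotient.mk_eq_zero (Ideal.span {a}) (x := (show R from x))).1 hx)
        refine ⟨y, ?_⟩
        change (cpx a b hab).d 1 0 y = x
        rw [cpx_d10]
        exact hy.symm
      · rw [ModuleCat.epi_iff_surjective]
        exact Submodule.mkQ_surjective _
    · rw [quasiIsoAt_iff_exactAt' _ _ (ChainComplex.exactAt_succ_single_obj _ _)]
      rw [HomologicalComplex.exactAt_iff' _ (m + 2) (m + 1) m (by simp) (by simp)]
      rcases (m + 1).even_or_odd with h | h
      · exact ShortComplex.exact_of_iso (HomologicalComplex.alternatingConstScIsoEven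
          (ModuleCat.of R R) _ _ _ (by simp) (by simp) h).symm (exact_mk a b ha _)
      · exact ShortComplex.exact_of_iso (HomologicalComplex.alternatingConstScIsoOdd
          (ModuleCat.of R R) _ _ _ (by simp) (by simp) h).symm (exact_mk b a hb _)

/-- the periodic resolution -/
noncomputable def res (ha : ∀ x, b * x = 0 → a ∣ x) (hb : ∀ x, a * x = 0 → b ∣ x) :
    ProjectiveResolution (ModuleCat.of R (R ⧸ Ideal.span {a})) where
  complex := cpx a b hab
  projective n := by
    change Projective (ModuleCat.of R R)
    infer_instance
  π := cpxπ a b hab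
  quasiIso := cpx_quasiIso a b hab ha hb

end res

/-- homology computation in `ModuleCat`. -/
lemma finrank_homology {k : Type} [Field k] (S : ShortComplex (ModuleCat.{0} k))
    {V : Type} [AddCommGroup V] [Module k V] (Φ : S.X₂ →ₗ[k] V)
    (hg : S.g = 0) (hΦ : Function.Surjective Φ) (hk : ∀ x, Φ x = 0 ↔ ∃ y, S.f y = x) :
    Module.finrank k S.homology = Module.finrank k V := by
  have e1 := (S.moduleCatHomologyIso).toLinearEquiv
  have hz : ∀ x : S.X₂, x ∈ LinearMap.ker S.g.hom := by intro x; simp [hg]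
  let Ψ : LinearMap.ker S.g.hom →ₗ[k] V := Φ ∘ₗ Submodule.subtype _
  have hΨ : Function.Surjective Ψ := by
    intro v
    obtain ⟨x, hx⟩ := hΦ v
    exact ⟨⟨x, hz x⟩, hx⟩
  have hr : LinearMap.range S.moduleCatToCycles = LinearMap.ker Ψ := by
    ext ⟨x, hx⟩
    rw [LinearMap.mem_ker, LinearMap.mem_range]
    change _ ↔ Φ x = 0
    rw [hk]
    constructor
    · rintro ⟨y, hy⟩
      exact ⟨y, congrArg Subtype.val hy⟩
    · rintro ⟨y, hy⟩
      exact ⟨y, Subtype.ext hy⟩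
  have e2 := (Submodule.quotEquivOfEq _ _ hr).trans (Ψ.quotKerEquivOfSurjective hΨ)
  exact (e1.trans e2).finrank_eq

lemma finrank_ext {k : Type} [Field k] {R : Type} [CommRing R] [Algebra k R] (a b : R)
    (hab : a * b = 0) (ha : ∀ x, b * x = 0 → a ∣ x) (hb : ∀ x, a * x = 0 → b ∣ x)
    (L : Type) [AddCommGroup L] [Module R L] (hL : ∀ l : L, b • l = 0)
    {V : Type} [AddCommGroup V] [Module k V] (Φ : L →+ V)
    (hs : ∀ (c : k) (l : L), Φ (algebraMap k R c • l) = c • Φ l)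
    (hΦ : Function.Surjective Φ) (hk : ∀ x, Φ x = 0 ↔ ∃ y, a • y = x) :
    Module.finrank k (((Ext k (ModuleCat R) 1).obj
          (Opposite.op (ModuleCat.of R (R ⧸ Ideal.span {a})))).obj
        (ModuleCat.of R L)) = Module.finrank k V := by
  rw [((res a b hab ha hb).isoExt (R := k) 1 (ModuleCat.of R L)).toLinearEquiv.finrank_eq]
  let C := (res a b hab ha hb).complex.linearYonedaObj k (ModuleCat.of R L)
  have e := C.homologyIsoSc' 0 1 2 (by simp) (by simp)
  rw [e.toLinearEquiv.finrank_eq]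
  let Θ : (ModuleCat.of R R ⟶ ModuleCat.of R L) →ₗ[k] V :=
    { toFun := fun f => Φ (f.hom (1 : R))
      map_add' := fun f g => by
        rw [ModuleCat.hom_add, LinearMap.add_apply]; exact map_add Φ _ _
      map_smul' := fun c f => hs c _ }
  have hd01 : ∀ f : ModuleCat.of R R ⟶ ModuleCat.of R L,
      (C.d 0 1) f = mulHom a ≫ f := fun f => by
    rw [← cpx_d10 a b hab]; rfl
  have hd12 : ∀ f : ModuleCat.of R R ⟶ ModuleCat.of R L,
      (C.d 1 2) f = mulHom b ≫ f := fun f => by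
    rw [← cpx_d21 a b hab]; rfl
  have hm : ∀ (c : R) (f : ModuleCat.of R R ⟶ ModuleCat.of R L),
      (mulHom c ≫ f).hom (1 : R) = c • f.hom (1 : R) := fun c f => by
    rw [← map_smul]; simp [mulHom]
  let hm1 : (ModuleCat.of R R ⟶ ModuleCat.of R L) → L := fun f => f.hom (1 : R)
  refine finrank_homology (C.sc' 0 1 2) Θ ?_ ?_ ?_
  · apply ModuleCat.hom_ext
    apply LinearMap.ext
    intro f
    refine (hd12 f).trans ?_
    apply ModuleCat.hom_ext
    apply LinearMap.ext_ring
    exact (hm b f).trans (hL _)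
  · intro v
    obtain ⟨l, hl⟩ := hΦ v
    refine ⟨ModuleCat.ofHom (LinearMap.toSpanSingleton R L l), ?_⟩
    change Φ ((1 : R) • l) = v
    rw [one_smul, hl]
  · intro f
    change Φ (hm1 f) = 0 ↔ _
    rw [hk]
    constructor
    · rintro ⟨y, hy⟩
      refine ⟨ModuleCat.ofHom (LinearMap.toSpanSingleton R L y), ?_⟩
      refine (hd01 _).trans ?_
      apply ModuleCat.hom_ext
      apply LinearMap.ext_ring
      refine (hm a _).trans (Eq.trans ?_ hy)
      change a • ((1 : R) • y) = _
      rw [one_smul]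
    · rintro ⟨y, hy⟩
      refine ⟨hm1 y, ?_⟩
      refine (hm a y).symm.trans ?_
      rw [← hy]
      exact congrArg hm1 (hd01 y).symm

section poly
open MvPolynomial
variable {k : Type} [Field k]

/-- `k[X,Y] → k[ε]`, `X ↦ ε`, `Y ↦ 0`. -/
noncomputable def ev : MvPolynomial (Fin 2) k →ₐ[k] DualNumber k :=
  aeval ![DualNumber.eps, 0]

@[simp] lemma ev_X0 : ev (k := k) (X 0) = DualNumber.eps := by simp [ev]
@[simp] lemma ev_X1 : ev (k := k) (X 1) = 0 := by simp [ev]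

lemma ev_surj : Function.Surjective (ev (k := k)) := by
  intro v
  refine ⟨C v.fst + C v.snd * X 0, ?_⟩
  rw [map_add, map_mul, ev_X0, ← algebraMap_eq, AlgHom.commutes, AlgHom.commutes]
  ext <;> simp [TrivSqZeroExt.algebraMap_eq_inl]

lemma decomp (p : MvPolynomial (Fin 2) k) : ∃ (a b : k) (u v : MvPolynomial (Fin 2) k),
    p = C a + C b * X 0 + u * X 0 ^ 2 + v * X 1 := by
  induction p using MvPolynomial.induction_on with
  | C a => exact ⟨a, 0, 0, 0, by simp⟩
  | add p q hp hq =>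
    obtain ⟨a, b, u, v, rfl⟩ := hp
    obtain ⟨a', b', u', v', rfl⟩ := hq
    exact ⟨a + a', b + b', u + u', v + v', by simp only [map_add]; ring⟩
  | mul_X p i hp =>
    obtain ⟨a, b, u, v, rfl⟩ := hp
    fin_cases i
    · exact ⟨0, a, C b + u * X 0, v * X 0, by simp only [map_zero, Fin.zero_eta]; ring⟩
    · exact ⟨0, 0, 0, C a + C b * X 0 + u * X 0 ^ 2 + v * X 1, by
        simp only [map_zero, Fin.mk_one]; ring⟩

lemma ev_ker (p : MvPolynomial (Fin 2) k) (hp : ev p = 0) :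
    ∃ u v : MvPolynomial (Fin 2) k, p = u * X 0 ^ 2 + v * X 1 := by
  obtain ⟨a, b, u, v, rfl⟩ := decomp p
  have he : (DualNumber.eps : DualNumber k) ^ 2 = 0 := by
    rw [pow_two, DualNumber.eps_mul_eps]
  rw [map_add, map_add, map_add, map_mul, map_mul, map_mul, map_pow, ev_X0, ev_X1, he,
    ← algebraMap_eq, AlgHom.commutes, AlgHom.commutes] at hp
  have h1 := congrArg TrivSqZeroExt.fst hp
  have h2 := congrArg TrivSqZeroExt.snd hp
  simp [TrivSqZeroExt.algebraMap_eq_inl] at h1 h2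
  exact ⟨u, v, by simp [h1, h2]⟩

/-- annihilators in a hypersurface quotient of a domain -/
lemma ann {A : Type} [CommRing A] [IsDomain A] (F p q : A) (hF : F = p * q) (hp : p ≠ 0)
    (x : A ⧸ Ideal.span {F}) (hx : Ideal.Quotient.mk (Ideal.span {F}) p * x = 0) :
    Ideal.Quotient.mk (Ideal.span {F}) q ∣ x := by
  obtain ⟨x, rfl⟩ := Ideal.Quotient.mk_surjective x
  rw [← map_mul, Ideal.Quotient.eq_zero_iff_mem, Ideal.mem_span_singleton, hF] at hx
  exact map_dvd _ ((mul_dvd_mul_iff_left hp).1 hx)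

end poly

end Stmt6Aux

open Stmt6Aux in
/-- Let `R = k[X,Y]/(F)`, `R₁ = R/z₁R` and `R₃₄ = R/z₃z₄R` (with `z₁ = Y`,
`z₃ = X − Y`, `z₄ = X − λY`).  Then `Ext¹_R(R₁, R₃₄)` is a 2-dimensional
`k`-vector space. -/
theorem stmt_6 {k : Type} [Field k] (lam : k) (h0 : lam ≠ 0) (h1 : lam ≠ 1)
    (F : MvPolynomial (Fin 2) k)
    (hF : F = MvPolynomial.X 0 * MvPolynomial.X 1 *
      (MvPolynomial.X 0 - MvPolynomial.X 1) *
      (MvPolynomial.X 0 - MvPolynomial.C lam * MvPolynomial.X 1)) :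
    letI R := MvPolynomial (Fin 2) k ⧸ Ideal.span {F}
    letI z1 : R := Ideal.Quotient.mk _ (MvPolynomial.X 1)
    letI z34 : R := Ideal.Quotient.mk _ ((MvPolynomial.X 0 - MvPolynomial.X 1) *
      (MvPolynomial.X 0 - MvPolynomial.C lam * MvPolynomial.X 1))
    Module.finrank k
      (((Ext k (ModuleCat R) 1).obj
          (Opposite.op (ModuleCat.of R (R ⧸ Ideal.span {z1})))).obj
        (ModuleCat.of R (R ⧸ Ideal.span {z34}))) = 2 := by
  let z1 : MvPolynomial (Fin 2) k ⧸ Ideal.span {F} := Ideal.Quotient.mk _ (MvPolynomial.X 1)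
  let z34 : MvPolynomial (Fin 2) k ⧸ Ideal.span {F} :=
    Ideal.Quotient.mk _ ((MvPolynomial.X 0 - MvPolynomial.X 1) *
      (MvPolynomial.X 0 - MvPolynomial.C lam * MvPolynomial.X 1))
  let Q : MvPolynomial (Fin 2) k := (MvPolynomial.X 0 - MvPolynomial.X 1) *
      (MvPolynomial.X 0 - MvPolynomial.C lam * MvPolynomial.X 1)
  let B : MvPolynomial (Fin 2) k := MvPolynomial.X 0 * Q
  let b : MvPolynomial (Fin 2) k ⧸ Ideal.span {F} := Ideal.Quotient.mk (Ideal.span {F}) B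
  have hFB : F = MvPolynomial.X 1 * B := by rw [hF]; ring
  have hFB' : F = B * MvPolynomial.X 1 := by rw [hF]; ring
  have hB0 : B ≠ 0 := by
    intro h
    have := congrArg (MvPolynomial.eval ![(1 : k), 0]) h
    simp [B, Q] at this
  have evQ : ev Q = 0 := by simp [Q]
  have hbz : b = z34 * Ideal.Quotient.mk (Ideal.span {F}) (MvPolynomial.X 0) := by
    change Ideal.Quotient.mk (Ideal.span {F}) B = Ideal.Quotient.mk (Ideal.span {F}) Q * _
    rw [← map_mul, mul_comm Q]
  let evR : MvPolynomial (Fin 2) k ⧸ Ideal.span {F} →+* DualNumber k := Ideal.Quotient.lift (Ideal.span {F}) ev.toRingHom (by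
    intro x hx
    obtain ⟨y, rfl⟩ := Ideal.mem_span_singleton.1 hx
    change ev (F * y) = 0
    rw [hFB, map_mul, map_mul, ev_X1, zero_mul, zero_mul])
  have hevR : ∀ p : MvPolynomial (Fin 2) k, evR (Ideal.Quotient.mk _ p) = ev p := fun p => rfl
  let evL : ((MvPolynomial (Fin 2) k ⧸ Ideal.span {F}) ⧸ Ideal.span {z34}) →+* DualNumber k := Ideal.Quotient.lift _ evR (by
    intro x hx
    obtain ⟨y, rfl⟩ := Ideal.mem_span_singleton.1 hx
    rw [map_mul]
    have : evR z34 = 0 := evQ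
    rw [this, zero_mul])
  have hevL : ∀ p : MvPolynomial (Fin 2) k ⧸ Ideal.span {F}, evL (Ideal.Quotient.mk _ p) = evR p := fun p => rfl
  have key := finrank_ext (k := k) z1 b ?_ ?_ ?_ ((MvPolynomial (Fin 2) k ⧸ Ideal.span {F}) ⧸ Ideal.span {z34}) ?_
    (V := DualNumber k) evL.toAddMonoidHom ?_ ?_ ?_
  · refine key.trans ?_
    have h2 : Module.finrank k (k × k) = 2 := by simp
    exact h2
  · change Ideal.Quotient.mk (Ideal.span {F}) _ * Ideal.Quotient.mk (Ideal.span {F}) B = 0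
    rw [← map_mul, ← hFB]
    exact Ideal.Quotient.eq_zero_iff_mem.2 (Ideal.mem_span_singleton_self F)
  · exact fun x hx => ann F B _ hFB' hB0 x hx
  · exact fun x hx => ann F _ B hFB (MvPolynomial.X_ne_zero 1) x hx
  · intro l
    obtain ⟨l, rfl⟩ := Ideal.Quotient.mk_surjective l
    change Ideal.Quotient.mk (Ideal.span {z34}) (b * l) = 0
    rw [Ideal.Quotient.eq_zero_iff_mem, Ideal.mem_span_singleton, hbz, mul_assoc]
    exact dvd_mul_right _ _
  · intro c l
    obtain ⟨l, rfl⟩ := Ideal.Quotient.mk_surjective l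
    obtain ⟨l, rfl⟩ := Ideal.Quotient.mk_surjective l
    change ev (algebraMap k _ c * l) = c • ev l
    rw [← Algebra.smul_def, map_smul]
  · intro v
    obtain ⟨p, hp⟩ := ev_surj v
    exact ⟨Ideal.Quotient.mk _ (Ideal.Quotient.mk _ p), hp⟩
  · intro l
    constructor
    · obtain ⟨l, rfl⟩ := Ideal.Quotient.mk_surjective l
      obtain ⟨p, rfl⟩ := Ideal.Quotient.mk_surjective l
      intro h
      obtain ⟨u, v, rfl⟩ := ev_ker p h
      let w : MvPolynomial (Fin 2) k := v + u * ((1 + MvPolynomial.C lam) * MvPolynomial.X 0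
        - MvPolynomial.C lam * MvPolynomial.X 1)
      refine ⟨Ideal.Quotient.mk _ (Ideal.Quotient.mk _ w), ?_⟩
      change Ideal.Quotient.mk (Ideal.span {z34})
        (Ideal.Quotient.mk (Ideal.span {F}) (MvPolynomial.X 1) * _) = _
      rw [Ideal.Quotient.eq, ← map_mul, ← map_sub, Ideal.mem_span_singleton]
      refine map_dvd (Ideal.Quotient.mk (Ideal.span {F})) (a := Q) ⟨-u, ?_⟩
      simp only [Q, w]
      ring
    · rintro ⟨y, rfl⟩
      obtain ⟨y, rfl⟩ := Ideal.Quotient.mk_surjective y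
      obtain ⟨y, rfl⟩ := Ideal.Quotient.mk_surjective y
      change ev (MvPolynomial.X 1 * y) = 0
      rw [map_mul, ev_X1, zero_mul]
end

section
/- Let R = k[X,Y]/(F), and let R₁₂ = R/(z₁z₂R) and R₃₄ = R/(z₃z₄R) (quotients by the images of z₁z₂ = XY and z₃z₄ = (X−Y)(X−λY)). Then the R-module Ext¹_R(R₁₂, R₃₄) is a 4-dimensional k-vector space. -/
open CategoryTheory


namespace Aux7
universe u
variable {R : Type u} [CommRing R] (a b : R)

noncomputable abbrev mulHom (r : R) : ModuleCat.of R R ⟶ ModuleCat.of R R :=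
  ModuleCat.ofHom (LinearMap.mulLeft R r)

variable {a b}

lemma mulHom_comp (r s : R) (h : r * s = 0) : mulHom r ≫ mulHom s = 0 := by
  ext
  simp [mul_comm s r, h]

/-- `... -b-> R -a-> R`. -/
noncomputable abbrev cplx (h : a * b = 0) : ChainComplex (ModuleCat.{u} R) ℕ :=
  HomologicalComplex.alternatingConst (ModuleCat.of R R) (φ := mulHom b) (ψ := mulHom a)
    (mulHom_comp _ _ (by rw [mul_comm, h])) (mulHom_comp _ _ h)
    fun _ _ => ComplexShape.down_nat_odd_add

lemma mulHom_mkQ (a : R) :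
    mulHom a ≫ ModuleCat.ofHom (Submodule.mkQ (Ideal.span {a})) = 0 := by
  apply ModuleCat.hom_ext
  apply LinearMap.ext_ring
  change Ideal.Quotient.mk (Ideal.span {a}) (a * 1) = 0
  rw [Ideal.Quotient.eq_zero_iff_mem, Ideal.mem_span_singleton]
  exact ⟨1, rfl⟩

lemma exists_of_mk_eq_zero (a x : R)
    (hx : Submodule.Quotient.mk (p := Ideal.span {a}) x = 0) : ∃ y, x = a * y := by
  rwa [Submodule.Quotient.mk_eq_zero, Ideal.mem_span_singleton] at hx

noncomputable def resπ (h : a * b = 0) :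
    cplx h ⟶ (ChainComplex.single₀ (ModuleCat.{u} R)).obj (ModuleCat.of R (R ⧸ Ideal.span {a})) :=
  ((cplx h).toSingle₀Equiv _).symm
    ⟨ModuleCat.ofHom (Submodule.mkQ (Ideal.span {a})), by
      have hd1 : (cplx h).d 1 0 = mulHom a := by simp; rfl
      rw [hd1]
      exact mulHom_mkQ a⟩

lemma res_quasiIso (h : a * b = 0) (ha : ∀ r, a * r = 0 → b ∣ r) (hb : ∀ r, b * r = 0 → a ∣ r) :
    QuasiIso (resπ h) where
  quasiIsoAt m := by
    induction m with
    | zero =>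
      simp only [resπ]
      rw [ChainComplex.quasiIsoAt₀_iff, ShortComplex.quasiIso_iff_of_zeros' _ rfl rfl rfl]
      constructor
      · rw [ShortComplex.moduleCat_exact_iff]
        intro x hx
        have hx' : Submodule.Quotient.mk (p := Ideal.span {a}) (x : R) = 0 := by
          simpa [ChainComplex.toSingle₀Equiv] using! hx
        obtain ⟨y, hy⟩ := exists_of_mk_eq_zero a x hx'
        refine ⟨(y : R), ?_⟩
        simpa [HomologicalComplex.alternatingConst] using! hy.symm
      · rw [ModuleCat.epi_iff_surjective]
        intro x
        obtain ⟨y, hy⟩ := Submodule.Quotient.mk_surjective _ x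
        refine ⟨y, ?_⟩
        simpa [ChainComplex.toSingle₀Equiv] using! hy
    | succ m _ =>
      rw [quasiIsoAt_iff_exactAt' (hL := ChainComplex.exactAt_succ_single_obj ..),
          HomologicalComplex.exactAt_iff' _ (m + 2) (m + 1) m (by simp) (by simp)]
      by_cases hm : Odd (m + 1)
      · rw [ShortComplex.exact_iff_of_iso (HomologicalComplex.alternatingConstScIsoOdd _ _ _ _
          (by simp) (by simp) hm), ShortComplex.moduleCat_exact_iff]
        intro x hx
        obtain ⟨y, hy⟩ := ha x (by simpa using hx)
        exact ⟨y, hy.symm⟩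
      · rw [ShortComplex.exact_iff_of_iso (HomologicalComplex.alternatingConstScIsoEven _ _ _ _
          (by simp) (by simp) (Nat.not_odd_iff_even.1 hm)), ShortComplex.moduleCat_exact_iff]
        intro x hx
        obtain ⟨y, hy⟩ := hb x (by simpa using hx)
        exact ⟨y, hy.symm⟩

noncomputable def res (h : a * b = 0) (ha : ∀ r, a * r = 0 → b ∣ r)
    (hb : ∀ r, b * r = 0 → a ∣ r) :
    ProjectiveResolution (ModuleCat.of R (R ⧸ Ideal.span {a})) where
  complex := cplx h
  projective _ := inferInstanceAs <| Projective (ModuleCat.of R R)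
  π := resπ h
  quasiIso := res_quasiIso h ha hb

section
variable (k : Type u) [Field k] [Algebra k R]

/-- The short complex computing Ext¹. -/
noncomputable abbrev scx (h : a * b = 0) (L : ModuleCat.{u} R) : ShortComplex (ModuleCat.{u} k) :=
  ((cplx h).linearYonedaObj k L).sc' 0 1 2

noncomputable def evMap (I : Ideal R) (hI : b ∈ I) :
   (((linearYoneda k (ModuleCat.{u} R)).obj (ModuleCat.of R (R ⧸ Ideal.span {b}))).obj
      (Opposite.op (ModuleCat.of R R))) →ₗ[k] (R ⧸ I) where
  toFun f := Ideal.Quotient.factor (S := Ideal.span {b}) (T := I)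
    (by rwa [Ideal.span_singleton_le_iff_mem])
      ((show ModuleCat.of R R ⟶ ModuleCat.of R (R ⧸ Ideal.span {b}) from f).hom (1 : R))
  map_add' f g := by
    exact map_add (Ideal.Quotient.factor (S := Ideal.span {b}) (T := I)
      (by rwa [Ideal.span_singleton_le_iff_mem])) 
      ((show ModuleCat.of R R ⟶ ModuleCat.of R (R ⧸ Ideal.span {b}) from f).hom (1 : R))
      ((show ModuleCat.of R R ⟶ ModuleCat.of R (R ⧸ Ideal.span {b}) from g).hom (1 : R))
  map_smul' c f := by
    have h : ((show ModuleCat.of R R ⟶ ModuleCat.of R (R ⧸ Ideal.span {b}) from (c • f)).hom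
        (1 : R) : R ⧸ Ideal.span {b}) = (algebraMap k R c) •
        ((show ModuleCat.of R R ⟶ ModuleCat.of R (R ⧸ Ideal.span {b}) from f).hom
          (1 : R) : R ⧸ Ideal.span {b}) := rfl
    rw [h, Algebra.smul_def, map_mul]
    simp [Algebra.smul_def]
    rfl

lemma mulHom_comp_eq_zero (f : ModuleCat.of R R ⟶ ModuleCat.of R (R ⧸ Ideal.span {b})) :
    mulHom b ≫ f = 0 := by
  apply ModuleCat.hom_ext
  apply LinearMap.ext_ring
  change f.hom (b * 1 : R) = 0
  obtain ⟨r, hr⟩ := Ideal.Quotient.mk_surjective (f.hom (1 : R))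
  have : f.hom (b * 1 : R) = b • (f.hom (1 : R)) := by
    rw [← map_smul]; rfl
  rw [this, ← hr]
  change Ideal.Quotient.mk (Ideal.span {b}) (b * r) = 0
  rw [Ideal.Quotient.eq_zero_iff_mem, Ideal.mem_span_singleton]
  exact ⟨r, rfl⟩

theorem finrank_ext (h : a * b = 0) (ha : ∀ r, a * r = 0 → b ∣ r)
    (hb : ∀ r, b * r = 0 → a ∣ r) :
    Module.finrank k (((Ext k (ModuleCat.{u} R) 1).obj
      (Opposite.op (ModuleCat.of R (R ⧸ Ideal.span {a})))).obj
        (ModuleCat.of R (R ⧸ Ideal.span {b}))) = Module.finrank k (R ⧸ Ideal.span {a, b}) := by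
  set L := ModuleCat.of R (R ⧸ Ideal.span {b}) with hL
  have hd1 : (cplx h).d 1 0 = mulHom a := by simp; rfl
  have hd2 : (cplx h).d 2 1 = mulHom b := by simp; rfl
  have hf : ∀ f : ModuleCat.of R R ⟶ L, (scx k h L).f f = mulHom a ≫ f := by
    intro f
    rw [← hd1]; rfl
  have hg : (scx k h L).g = 0 := by
    ext f
    have : (scx k h L).g f = (mulHom b ≫ f : ModuleCat.of R R ⟶ L) := by
      rw [← hd2]; rfl
    refine this.trans ?_
    exact mulHom_comp_eq_zero f
  let S := scx k h L
  have e : ((Ext k (ModuleCat.{u} R) 1).obj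
      (Opposite.op (ModuleCat.of R (R ⧸ Ideal.span {a})))).obj L ≅
        ModuleCat.of k (S.X₂ ⧸ LinearMap.range S.f.hom) :=
    (res h ha hb).isoExt 1 L ≪≫
    ShortComplex.homologyMapIso (((cplx h).linearYonedaObj k L).isoSc' 0 1 2 (by simp) (by simp))
    ≪≫ S.asIsoHomologyι hg ≪≫ S.moduleCatOpcyclesIso
  rw [e.toLinearEquiv.finrank_eq]
  have hI : b ∈ Ideal.span {a, b} := Ideal.subset_span (by simp)
  let Φ : S.X₂ →ₗ[k] (R ⧸ Ideal.span {a, b}) := evMap k (Ideal.span {a, b}) hI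
  have hsurj : Function.Surjective Φ := by
    intro q
    obtain ⟨r, rfl⟩ := Ideal.Quotient.mk_surjective q
    refine ⟨ModuleCat.ofHom (LinearMap.toSpanSingleton R _ (Ideal.Quotient.mk _ r)), ?_⟩
    have : (LinearMap.toSpanSingleton R (R ⧸ Ideal.span {b}) (Ideal.Quotient.mk _ r)) (1 : R) =
      Ideal.Quotient.mk _ r := by simp
    change Ideal.Quotient.factor (S := Ideal.span {b}) (T := Ideal.span {a, b})
      (by rwa [Ideal.span_singleton_le_iff_mem]) ((LinearMap.toSpanSingleton R (R ⧸ Ideal.span {b})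
      (Ideal.Quotient.mk _ r)) (1 : R)) = _
    rw [this, Ideal.Quotient.factor_mk]
  have hker : LinearMap.ker Φ = LinearMap.range S.f.hom := by
    ext f'
    rw [LinearMap.mem_ker, LinearMap.mem_range]
    let f : ModuleCat.of R R ⟶ ModuleCat.of R (R ⧸ Ideal.span {b}) := f'
    have hΦ : Φ f' = Ideal.Quotient.factor (S := Ideal.span {b}) (T := Ideal.span {a, b})
      (by rwa [Ideal.span_singleton_le_iff_mem]) (f.hom (1 : R)) := rfl
    rw [hΦ]
    constructor
    · intro h0
      obtain ⟨r, hr⟩ := Ideal.Quotient.mk_surjective (f.hom (1 : R))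
      rw [← hr, Ideal.Quotient.factor_mk, Ideal.Quotient.eq_zero_iff_mem,
        Ideal.mem_span_pair] at h0
      obtain ⟨u, v, huv⟩ := h0
      refine ⟨ModuleCat.ofHom (LinearMap.toSpanSingleton R (R ⧸ Ideal.span {b})
        (Ideal.Quotient.mk _ u)), ?_⟩
      refine (hf _).trans ?_
      apply ModuleCat.hom_ext
      apply LinearMap.ext_ring
      refine Eq.trans ?_ hr
      change (a * 1 : R) • Ideal.Quotient.mk (Ideal.span {b}) u = _
      rw [mul_one, ← huv, Algebra.smul_def, Ideal.Quotient.algebraMap_eq, ← map_mul,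
        Ideal.Quotient.mk_eq_mk_iff_sub_mem, Ideal.mem_span_singleton]
      exact ⟨-v, by ring⟩
    · rintro ⟨g, hg'⟩
      have h2 : f = mulHom a ≫
        (show ModuleCat.of R R ⟶ ModuleCat.of R (R ⧸ Ideal.span {b}) from g) :=
        hg'.symm.trans (hf _)
      have h1 : f.hom (1 : R) = a •
        ((show ModuleCat.of R R ⟶ ModuleCat.of R (R ⧸ Ideal.span {b}) from g).hom (1 : R) :
          R ⧸ Ideal.span {b}) := by
        rw [h2, ← map_smul]
        change ModuleCat.Hom.hom g (a * 1 : R) = ModuleCat.Hom.hom g (a * 1 : R)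
        rfl
      rw [h1, Algebra.smul_def, map_mul, Ideal.Quotient.algebraMap_eq, Ideal.Quotient.factor_mk,
        Ideal.Quotient.eq_zero_iff_mem.2 (Ideal.subset_span (by simp)), zero_mul]
  rw [← hker]
  exact (Φ.quotKerEquivOfSurjective hsurj).finrank_eq
end
end Aux7


namespace Aux7
open MvPolynomial
variable {k : Type} [Field k] (lam : k)

noncomputable def mm (i j : ℕ) : Fin 2 →₀ ℕ := Finsupp.single 0 i + Finsupp.single 1 j

lemma monomial_mm (i j : ℕ) (c : k) : monomial (mm i j) c = C c * (X 0 ^ i * X 1 ^ j) := by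
  rw [MvPolynomial.monomial_eq]
  simp [mm, Finsupp.prod_fintype]

lemma mm_surj (s : Fin 2 →₀ ℕ) : s = mm (s 0) (s 1) := by
  ext i; fin_cases i <;> simp [mm]

lemma mm_inj (i j i' j' : ℕ) : mm i j = mm i' j' ↔ i = i' ∧ j = j' := by
  constructor
  · intro h
    have h0 := DFunLike.congr_fun h 0
    have h1 := DFunLike.congr_fun h 1
    simp [mm] at h0 h1
    exact ⟨h0, h1⟩
  · rintro ⟨rfl, rfl⟩; rfl

noncomputable def cf : MvPolynomial (Fin 2) k →ₗ[k] (Fin 4 → k) :=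
  LinearMap.pi ![lcoeff k (mm 0 0), lcoeff k (mm 1 0), lcoeff k (mm 0 1),
    lcoeff k (mm 0 2) - lam • lcoeff k (mm 2 0)]

noncomputable def Bp : MvPolynomial (Fin 2) k := (X 0 - X 1) * (X 0 - C lam * X 1)
noncomputable def Ap : MvPolynomial (Fin 2) k := X 0 * X 1

noncomputable def rep (v : Fin 4 → k) : MvPolynomial (Fin 2) k :=
  C (v 0) + C (v 1) * X 0 + C (v 2) * X 1 + C (v 3) * X 1 ^ 2

lemma cf_monomial (i j : ℕ) (c : k) : cf lam (monomial (mm i j) c) =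
  ![if i = 0 ∧ j = 0 then c else 0, if i = 1 ∧ j = 0 then c else 0,
    if i = 0 ∧ j = 1 then c else 0, 
    (if i = 0 ∧ j = 2 then c else 0) - lam * (if i = 2 ∧ j = 0 then c else 0)] := by
  ext t
  fin_cases t <;> simp [cf, coeff_monomial, mm_inj]

lemma cf_rep (v : Fin 4 → k) : cf lam (rep v) = v := by
  have : rep v = monomial (mm 0 0) (v 0) + monomial (mm 1 0) (v 1) + monomial (mm 0 1) (v 2)
      + monomial (mm 0 2) (v 3) := by
    simp [monomial_mm, rep]
  rw [this]
  simp only [map_add, cf_monomial]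
  ext t
  fin_cases t <;> simp

lemma cf_A (p : MvPolynomial (Fin 2) k) : cf lam (p * Ap) = 0 := by
  induction p using MvPolynomial.induction_on' with
  | add p q hp hq => rw [add_mul, map_add, hp, hq, add_zero]
  | monomial s c =>
    have : monomial s c * Ap = monomial (mm (s 0 + 1) (s 1 + 1)) c := by
      conv_lhs => rw [mm_surj s]
      simp only [monomial_mm, Ap]; ring
    rw [this, cf_monomial]
    ext t
    fin_cases t <;> simp

lemma cf_B (p : MvPolynomial (Fin 2) k) : cf lam (p * Bp lam) = 0 := by
  induction p using MvPolynomial.induction_on' with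
  | add p q hp hq => rw [add_mul, map_add, hp, hq, add_zero]
  | monomial s c =>
    have : monomial s c * Bp lam = monomial (mm (s 0 + 2) (s 1)) c
       - monomial (mm (s 0 + 1) (s 1 + 1)) ((1 + lam) * c)
       + monomial (mm (s 0) (s 1 + 2)) (lam * c) := by
      conv_lhs => rw [mm_surj s]
      simp only [monomial_mm, Bp, map_mul, map_add, map_one]; ring
    rw [this]
    simp only [map_add, map_sub, cf_monomial]
    ext t
    fin_cases t <;> simp

lemma sub_rep_mem (h0 : lam ≠ 0) (p : MvPolynomial (Fin 2) k) :
    p - rep (cf lam p) ∈ Ideal.span {Ap, Bp lam} := by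
  induction p using MvPolynomial.induction_on' with
  | add p q hp hq =>
    have := Ideal.add_mem _ hp hq
    convert this using 1
    simp [rep]; ring
  | monomial s c =>
    rw [mm_surj s]
    generalize s 0 = i
    generalize s 1 = j
    rw [cf_monomial, monomial_mm, Ideal.mem_span_pair]
    have hC : (C lam * C lam⁻¹ : MvPolynomial (Fin 2) k) = 1 := by
      rw [← C_mul, mul_inv_cancel₀ h0, C_1]
    match i, j with
    | 0, 0 => exact ⟨0, 0, by simp [rep]⟩
    | 1, 0 => exact ⟨0, 0, by simp [rep]⟩
    | 0, 1 => exact ⟨0, 0, by simp [rep]⟩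
    | 0, 2 => exact ⟨0, 0, by simp [rep]⟩
    | 2, 0 => exact ⟨C c * (1 + C lam), C c, by simp [rep, Ap, Bp]; ring⟩
    | i+1, j+1 => exact ⟨C c * X 0 ^ i * X 1 ^ j, 0, by simp [rep, Ap, Bp]; ring⟩
    | i+3, 0 => 
      refine ⟨C c * X 0 ^ i * (X 0 * (1 + C lam) - C lam * X 1), C c * X 0 ^ (i + 1), ?_⟩
      simp [rep, Ap, Bp]; ring
    | 0, j+3 => 
      refine ⟨C lam⁻¹ * C c * X 1 ^ j * (X 1 * (1 + C lam) - X 0),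
        C lam⁻¹ * C c * X 1 ^ (j + 1), ?_⟩
      simp [rep, Ap, Bp]
      linear_combination (C c * X 1 ^ (j + 3)) * hC

theorem cf_ker (h0 : lam ≠ 0) (p : MvPolynomial (Fin 2) k) :
    cf lam p = 0 ↔ p ∈ Ideal.span {Ap, Bp lam} := by
  constructor
  · intro h
    have := sub_rep_mem lam h0 p
    rw [h] at this
    simpa [rep] using this
  · intro h
    rw [Ideal.mem_span_pair] at h
    obtain ⟨u, v, rfl⟩ := h
    rw [map_add, cf_A, cf_B, add_zero]

variable (F : MvPolynomial (Fin 2) k)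

theorem finrank_four (h0 : lam ≠ 0) (hF : F = Ap * Bp lam) :
    Module.finrank k ((MvPolynomial (Fin 2) k ⧸ Ideal.span {F}) ⧸
      Ideal.span {Ideal.Quotient.mk (Ideal.span {F}) Ap, Ideal.Quotient.mk _ (Bp lam)}) = 4 := by
  set J := Ideal.span {Ideal.Quotient.mk (Ideal.span {F}) Ap, Ideal.Quotient.mk _ (Bp lam)}
  let ψ : MvPolynomial (Fin 2) k →ₐ[k] ((MvPolynomial (Fin 2) k ⧸ Ideal.span {F}) ⧸ J) :=
    (Ideal.Quotient.mkₐ k J).comp (Ideal.Quotient.mkₐ k (Ideal.span {F}))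
  have hψ : Function.Surjective ψ.toLinearMap :=
    (Ideal.Quotient.mk_surjective).comp (Ideal.Quotient.mk_surjective)
  have hker : LinearMap.ker ψ.toLinearMap = LinearMap.ker (cf lam) := by
    ext p
    rw [LinearMap.mem_ker, LinearMap.mem_ker, cf_ker lam h0]
    change Ideal.Quotient.mk J (Ideal.Quotient.mk _ p) = 0 ↔ _
    rw [Ideal.Quotient.eq_zero_iff_mem]
    have hJ : J = (Ideal.span {Ap, Bp lam}).map (Ideal.Quotient.mk (Ideal.span {F})) := by
      rw [Ideal.map_span, Set.image_pair]
    rw [hJ, ← Ideal.mem_comap, Ideal.comap_map_of_surjective _ Ideal.Quotient.mk_surjective,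
      ← RingHom.ker_eq_comap_bot, Ideal.mk_ker, sup_eq_left.2]
    rw [Ideal.span_singleton_le_iff_mem, hF]
    exact Ideal.mul_mem_right _ _ (Ideal.subset_span (by simp))
  have hcf : Function.Surjective (cf lam) := fun v => ⟨_, cf_rep lam v⟩
  rw [← (ψ.toLinearMap.quotKerEquivOfSurjective hψ).finrank_eq, hker,
    ((cf lam).quotKerEquivOfSurjective hcf).finrank_eq]
  simp

lemma mk_ann (P Q : MvPolynomial (Fin 2) k) (hP : P ≠ 0) (hF : F = P * Q)
    (r : MvPolynomial (Fin 2) k ⧸ Ideal.span {F})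
    (hr : Ideal.Quotient.mk (Ideal.span {F}) P * r = 0) :
    Ideal.Quotient.mk (Ideal.span {F}) Q ∣ r := by
  obtain ⟨p, rfl⟩ := Ideal.Quotient.mk_surjective r
  rw [← map_mul, Ideal.Quotient.eq_zero_iff_mem, Ideal.mem_span_singleton, hF] at hr
  exact map_dvd _ ((mul_dvd_mul_iff_left hP).1 hr)

lemma Ap_ne : (Ap : MvPolynomial (Fin 2) k) ≠ 0 := mul_ne_zero (X_ne_zero _) (X_ne_zero _)
lemma Bp_ne : Bp lam ≠ 0 := by
  intro h
  have := congrArg (MvPolynomial.eval ![1, 0]) h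
  simp [Bp] at this
end Aux7

/-- Let `R = k[X,Y]/(F)`, `R₁₂ = R/z₁z₂R` and `R₃₄ = R/z₃z₄R` (with `z₁z₂ = XY`
and `z₃z₄ = (X−Y)(X−λY)`).  Then `Ext¹_R(R₁₂, R₃₄)` is a 4-dimensional
`k`-vector space. -/
theorem stmt_7 {k : Type} [Field k] (lam : k) (h0 : lam ≠ 0) (h1 : lam ≠ 1)
    (F : MvPolynomial (Fin 2) k)
    (hF : F = MvPolynomial.X 0 * MvPolynomial.X 1 *
      (MvPolynomial.X 0 - MvPolynomial.X 1) *
      (MvPolynomial.X 0 - MvPolynomial.C lam * MvPolynomial.X 1)) :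
    letI R := MvPolynomial (Fin 2) k ⧸ Ideal.span {F}
    letI z12 : R := Ideal.Quotient.mk _ (MvPolynomial.X 0 * MvPolynomial.X 1)
    letI z34 : R := Ideal.Quotient.mk _ ((MvPolynomial.X 0 - MvPolynomial.X 1) *
      (MvPolynomial.X 0 - MvPolynomial.C lam * MvPolynomial.X 1))
    Module.finrank k
      (((Ext k (ModuleCat R) 1).obj
          (Opposite.op (ModuleCat.of R (R ⧸ Ideal.span {z12})))).obj
        (ModuleCat.of R (R ⧸ Ideal.span {z34}))) = 4 := by
  have hF' : F = Aux7.Ap * Aux7.Bp lam := by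
    rw [hF, Aux7.Ap, Aux7.Bp]; ring
  refine (Aux7.finrank_ext k (a := Ideal.Quotient.mk (Ideal.span {F}) Aux7.Ap)
    (b := Ideal.Quotient.mk (Ideal.span {F}) (Aux7.Bp lam)) ?_ ?_ ?_).trans
    (Aux7.finrank_four lam F h0 hF')
  · rw [← map_mul, ← hF', Ideal.Quotient.eq_zero_iff_mem]
    exact Ideal.mem_span_singleton_self F
  · exact Aux7.mk_ann F _ _ Aux7.Ap_ne hF'
  · exact Aux7.mk_ann F _ _ (Aux7.Bp_ne lam) (by rw [hF', mul_comm])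
end

section
/- Fix μ ∈ k with μ ≠ 0 and μ ≠ 1, and n ≥ 1. Let Φ₀(n,μ) be the 2n×2n block lower-bidiagonal matrix over k[X,Y] whose n diagonal 2×2 blocks all equal φ(μ) = [[z₁z₃, −z₂z₃], [−μz₁z₄, z₂z₄]] and whose n−1 subdiagonal 2×2 blocks all equal φ′(μ) = (μ−1)⁻¹·[[z₁z₃, −z₂z₃], [−z₁z₃, z₂z₃]], all other blocks being zero. Then there exists a 2n×2n matrix Ψ with entries in k[X,Y] such that Φ₀(n,μ)·Ψ = Ψ·Φ₀(n,μ) = F·I₂ₙ. -/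
/-- Parity as an element of `Fin 2`. -/
def par (a : ℕ) : Fin 2 := ⟨a % 2, Nat.mod_lt a Nat.two_pos⟩

/-- Block diagonal matrix with all diagonal blocks equal to `M`. -/
def blkDiag {R : Type*} [CommRing R] (n : ℕ) (M : Matrix (Fin 2) (Fin 2) R) :
    Matrix (Fin (2 * n)) (Fin (2 * n)) R :=
  fun p q => if p.val / 2 = q.val / 2 then
    M (par p.val) (par q.val) else 0

/-- The unipotent factor `1 + N ⊗ E`. -/
def uniFac {R : Type*} [CommRing R] (n : ℕ) (E : Matrix (Fin 2) (Fin 2) R) :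
    Matrix (Fin (2 * n)) (Fin (2 * n)) R :=
  fun p q => if p = q then 1 else if p.val / 2 = q.val / 2 + 1 then
    E (par p.val) (par q.val) else 0

theorem mul_blkDiag {R : Type*} [CommRing R] (n : ℕ) (M : Matrix (Fin 2) (Fin 2) R)
    (A : Matrix (Fin (2 * n)) (Fin (2 * n)) R) (p q : Fin (2 * n)) :
    (A * blkDiag n M) p q =
      A p ⟨2 * (q.val / 2), by omega⟩ * M 0 (par q.val) +
      A p ⟨2 * (q.val / 2) + 1, by omega⟩ * M 1 (par q.val) := by
  rw [Matrix.mul_apply]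
  have hne : (⟨2 * (q.val / 2), by omega⟩ : Fin (2 * n)) ≠ ⟨2 * (q.val / 2) + 1, by omega⟩ := by
    intro h
    have := congrArg Fin.val h
    simp at this
  rw [← Finset.sum_subset (Finset.subset_univ
    ({⟨2 * (q.val / 2), by omega⟩, ⟨2 * (q.val / 2) + 1, by omega⟩} : Finset (Fin (2 * n))))]
  · rw [Finset.sum_pair hne]
    have e1 : 2 * (q.val / 2) / 2 = q.val / 2 := by omega
    have e2 : (2 * (q.val / 2) + 1) / 2 = q.val / 2 := by omega
    have e3 : 2 * (q.val / 2) % 2 = 0 := by omega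
    have e4 : (2 * (q.val / 2) + 1) % 2 = 1 := by omega
    simp only [blkDiag, par, e1, e2, e3, e4, if_true]
    rfl
  · intro r _ hr
    have : r.val / 2 ≠ q.val / 2 := by
      intro h
      apply hr
      simp only [Finset.mem_insert, Finset.mem_singleton, Fin.ext_iff]
      omega
    simp [blkDiag, this]

theorem blkDiag_mul {R : Type*} [CommRing R] (n : ℕ) (M N : Matrix (Fin 2) (Fin 2) R) :
    blkDiag n M * blkDiag n N = blkDiag n (M * N) := by
  ext p q
  rw [mul_blkDiag]
  have e1 : 2 * (q.val / 2) / 2 = q.val / 2 := by omega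
  have e2 : (2 * (q.val / 2) + 1) / 2 = q.val / 2 := by omega
  have e3 : 2 * (q.val / 2) % 2 = 0 := by omega
  have e4 : (2 * (q.val / 2) + 1) % 2 = 1 := by omega
  simp only [blkDiag, par, e1, e2, e3, e4]
  by_cases h : p.val / 2 = q.val / 2
  · simp only [h, if_true, Matrix.mul_apply, Fin.sum_univ_two]
    rfl
  · simp [h]

theorem blkDiag_smul_one {R : Type*} [CommRing R] (n : ℕ) (F : R) :
    blkDiag n (F • (1 : Matrix (Fin 2) (Fin 2) R)) = F • 1 := by
  ext p q
  simp only [blkDiag, par, Matrix.smul_apply, Matrix.one_apply, Fin.ext_iff]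
  by_cases h : p.val = q.val
  · simp [h]
  · by_cases h2 : p.val / 2 = q.val / 2
    · have : p.val % 2 ≠ q.val % 2 := by omega
      simp [h, h2, this]
    · simp [h, h2]

theorem uniFac_det {R : Type*} [CommRing R] (n : ℕ) (E : Matrix (Fin 2) (Fin 2) R) :
    (uniFac n E).det = 1 := by
  rw [Matrix.det_of_isLowerTriangular]
  · simp [uniFac]
  · intro p q h
    have h' : p.val < q.val := h
    have h1 : p ≠ q := by
      rintro rfl
      omega
    have h2 : p.val / 2 ≠ q.val / 2 + 1 := by omega
    simp [uniFac, h1, h2]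

theorem uniFac_mul {R : Type*} [CommRing R] (n : ℕ) (E M : Matrix (Fin 2) (Fin 2) R)
    (p q : Fin (2 * n)) :
    (uniFac n E * blkDiag n M) p q =
      if p.val / 2 = q.val / 2 then M (par p.val) (par q.val)
      else if p.val / 2 = q.val / 2 + 1 then
        (E * M) (par p.val) (par q.val)
      else 0 := by
  rw [mul_blkDiag]
  have e1 : 2 * (q.val / 2) / 2 = q.val / 2 := by omega
  have e2 : (2 * (q.val / 2) + 1) / 2 = q.val / 2 := by omega
  have e3 : 2 * (q.val / 2) % 2 = 0 := by omega
  have e4 : (2 * (q.val / 2) + 1) % 2 = 1 := by omega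
  simp only [uniFac, par, e1, e2, e3, e4, Fin.ext_iff]
  by_cases h : p.val / 2 = q.val / 2
  · have h' : ¬ (p.val / 2 = q.val / 2 + 1) := by omega
    rw [if_pos h, if_neg h', if_neg h']
    rcases Nat.mod_two_eq_zero_or_one p.val with hp | hp
    · have a1 : p.val = 2 * (q.val / 2) := by omega
      have a2 : ¬ p.val = 2 * (q.val / 2) + 1 := by omega
      rw [if_pos a1, if_neg a2]
      simp [hp]
    · have a1 : ¬ p.val = 2 * (q.val / 2) := by omega
      have a2 : p.val = 2 * (q.val / 2) + 1 := by omega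
      rw [if_neg a1, if_pos a2]
      simp [hp]
  · have a1 : ¬ p.val = 2 * (q.val / 2) := by omega
    have a2 : ¬ p.val = 2 * (q.val / 2) + 1 := by omega
    rw [if_neg h, if_neg a1, if_neg a2]
    by_cases h' : p.val / 2 = q.val / 2 + 1
    · simp only [h', if_true, Matrix.mul_apply, Fin.sum_univ_two]
      rfl
    · simp [h']

/-- For `μ ≠ 0,1` and `n ≥ 1`, the `2n×2n` block lower-bidiagonal matrix `Φ₀(n,μ)`
with diagonal blocks `φ(μ) = [[z₁z₃, −z₂z₃], [−μz₁z₄, z₂z₄]]` and subdiagonal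
blocks `φ′(μ) = (μ−1)⁻¹[[z₁z₃, −z₂z₃], [−z₁z₃, z₂z₃]]` is part of a matrix
factorization of `F`: there is `Ψ` with `Φ₀(n,μ)Ψ = ΨΦ₀(n,μ) = F·I₂ₙ`. -/
theorem stmt_9 {k : Type*} [Field k] (lam : k) (h0 : lam ≠ 0) (h1 : lam ≠ 1)
    (z1 z2 z3 z4 F : MvPolynomial (Fin 2) k)
    (hz1 : z1 = MvPolynomial.X 1) (hz2 : z2 = MvPolynomial.X 0)
    (hz3 : z3 = MvPolynomial.X 0 - MvPolynomial.X 1)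
    (hz4 : z4 = MvPolynomial.X 0 - MvPolynomial.C lam * MvPolynomial.X 1)
    (hF : F = z1 * z2 * z3 * z4)
    (μ : k) (hμ0 : μ ≠ 0) (hμ1 : μ ≠ 1) (n : ℕ) (hn : 1 ≤ n)
    (phi phi' : Matrix (Fin 2) (Fin 2) (MvPolynomial (Fin 2) k))
    (hphi : phi = !![z1 * z3, -(z2 * z3); -(MvPolynomial.C μ * z1 * z4), z2 * z4])
    (hphi' : phi' = (MvPolynomial.C ((μ - 1)⁻¹) : MvPolynomial (Fin 2) k) •
      !![z1 * z3, -(z2 * z3); -(z1 * z3), z2 * z3])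
    (Φ : Matrix (Fin (2 * n)) (Fin (2 * n)) (MvPolynomial (Fin 2) k))
    (hΦ : ∀ p q : Fin (2 * n), Φ p q =
      if p.val / 2 = q.val / 2 then phi ⟨p.val % 2, by omega⟩ ⟨q.val % 2, by omega⟩
      else if p.val / 2 = q.val / 2 + 1 then
        phi' ⟨p.val % 2, by omega⟩ ⟨q.val % 2, by omega⟩
      else 0) :
    ∃ Ψ : Matrix (Fin (2 * n)) (Fin (2 * n)) (MvPolynomial (Fin 2) k),
      Φ * Ψ = F • (1 : Matrix (Fin (2 * n)) (Fin (2 * n)) (MvPolynomial (Fin 2) k)) ∧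
      Ψ * Φ = F • (1 : Matrix (Fin (2 * n)) (Fin (2 * n)) (MvPolynomial (Fin 2) k)) := by
  have hc : (MvPolynomial.C ((μ - 1)⁻¹) : MvPolynomial (Fin 2) k) * (MvPolynomial.C μ - 1) = 1 := by
    rw [← MvPolynomial.C_1, ← MvPolynomial.C_sub, ← MvPolynomial.C_mul,
      inv_mul_cancel₀ (sub_ne_zero.mpr hμ1)]
  set c : MvPolynomial (Fin 2) k := MvPolynomial.C ((μ - 1)⁻¹) with hcdef
  set m : MvPolynomial (Fin 2) k := MvPolynomial.C μ with hm
  obtain ⟨psi, hp1, hp2⟩ : ∃ psi : Matrix (Fin 2) (Fin 2) (MvPolynomial (Fin 2) k),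
      phi * psi = F • 1 ∧ psi * phi = F • 1 := by
    have hd : -c * phi.det = F := by
      rw [hphi, hF, Matrix.det_fin_two_of]
      linear_combination (z1 * z2 * z3 * z4) * hc
    refine ⟨(-c) • phi.adjugate, ?_, ?_⟩
    · rw [Matrix.mul_smul, Matrix.mul_adjugate, smul_smul, hd]
    · rw [Matrix.smul_mul, Matrix.adjugate_mul, smul_smul, hd]
  have hE : phi' = !![c, 0; -c, 0] * phi := by
    rw [hphi', hphi]
    ext i j
    fin_cases i <;> fin_cases j <;> simp [Matrix.mul_apply, Fin.sum_univ_two]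
  have hfac : Φ = uniFac n !![c, 0; -c, 0] * blkDiag n phi := by
    ext1 p q
    rw [hΦ, uniFac_mul, hE]
    rfl
  have hu : IsUnit (uniFac n !![c, 0; -c, 0]).det := by
    rw [uniFac_det]
    exact isUnit_one
  generalize uniFac n !![c, 0; -c, 0] = A at hfac hu
  refine ⟨blkDiag n psi * A⁻¹, ?_, ?_⟩
  · rw [hfac, Matrix.mul_assoc, ← Matrix.mul_assoc (blkDiag n phi), blkDiag_mul, hp1,
      blkDiag_smul_one, Matrix.smul_mul, Matrix.one_mul, Matrix.mul_smul,
      Matrix.mul_nonsing_inv _ hu]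
  · rw [hfac, Matrix.mul_assoc, ← Matrix.mul_assoc A⁻¹, Matrix.nonsing_inv_mul _ hu,
      Matrix.one_mul, blkDiag_mul, hp2, blkDiag_smul_one]
end

section
/- Fix n ≥ 1. Let Φ₂(n)⁺ be the (2n+1)×(2n+1) lower-triangular matrix over k[X,Y], with rows and columns indexed 0,…,2n, whose only nonzero entries are: (0,0) = z₃; (1,0) = −z₄, (1,1) = z₁z₄; for 1 ≤ j ≤ n: (2j, 2j−1) = −z₁z₃, (2j, 2j) = z₂z₃; and for 1 ≤ j ≤ n−1: (2j+1, 2j−1) = z₁z₄, (2j+1, 2j) = −z₂z₄, (2j+1, 2j+1) = z₁z₄. Then det Φ₂(n)⁺ = z₁ⁿ z₂ⁿ z₃ⁿ⁺¹ z₄ⁿ, and there exists a (2n+1)×(2n+1) matrix Ψ with entries in k[X,Y] such that Φ₂(n)⁺·Ψ = Ψ·Φ₂(n)⁺ = F·I₂ₙ₊₁. -/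
set_option linter.unusedSimpArgs false

def phiN {R : Type*} [CommRing R] (z1 z2 z3 z4 : R) (i j : ℕ) : R :=
      if i = 0 then (if j = 0 then z3 else 0)
      else if i = 1 then
        (if j = 0 then -z4 else if j = 1 then z1 * z4 else 0)
      else if i % 2 = 0 then
        (if j = i - 1 then -(z1 * z3)
         else if j = i then z2 * z3 else 0)
      else
        (if j = i - 2 then z1 * z4
         else if j = i - 1 then -(z2 * z4)
         else if j = i then z1 * z4 else 0)

def psiN {R : Type*} [CommRing R] (z1 z2 z3 z4 : R) (i j : ℕ) : R :=
      if i = 0 then (if j = 0 then z1 * z2 * z4 else 0)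
      else if i % 2 = 0 then
        (if j = i then z1 * z4 else if j = i - 1 then z1 * z3
          else if j = i - 2 then z1 * z4 else 0)
      else
        (if j = i then z2 * z3 else if j = i - 1 then z2 * z4 else 0)

theorem sum_three {R : Type*} [CommRing R] (m a : ℕ) (ha : a + 2 < m) (f : ℕ → R)
    (hf : ∀ l, l ≠ a → l ≠ a + 1 → l ≠ a + 2 → f l = 0) :
    ∑ l ∈ Finset.range m, f l = f a + f (a + 1) + f (a + 2) := by
  rw [← Finset.sum_subset (s₁ := {a, a + 1, a + 2})]
  · rw [Finset.sum_insert (by simp), Finset.sum_insert (by simp), Finset.sum_singleton]; ring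
  · intro x hx
    simp only [Finset.mem_insert, Finset.mem_singleton] at hx
    simp only [Finset.mem_range]; omega
  · intro x _ hx
    simp only [Finset.mem_insert, Finset.mem_singleton, not_or] at hx
    exact hf x hx.1 hx.2.1 hx.2.2

theorem nat_cases (i : ℕ) : i = 0 ∨ i = 1 ∨ (∃ c, i = 2 * c + 2) ∨ (∃ c, i = 2 * c + 3) := by
  rcases Nat.even_or_odd' i with ⟨c, h | h⟩
  · rcases c with _ | c
    · left; omega
    · right; right; left; exact ⟨c, by omega⟩
  · rcases c with _ | c
    · right; left; omega
    · right; right; right; exact ⟨c, by omega⟩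

theorem phi_even {R : Type*} [CommRing R] (z1 z2 z3 z4 : R) (c j : ℕ) :
    phiN z1 z2 z3 z4 (2 * c + 2) j =
      if j = 2 * c + 1 then -(z1 * z3) else if j = 2 * c + 2 then z2 * z3 else 0 := by
  unfold phiN
  rw [if_neg (by omega), if_neg (by omega), if_pos (by omega)]
  rfl

theorem phi_odd {R : Type*} [CommRing R] (z1 z2 z3 z4 : R) (c j : ℕ) :
    phiN z1 z2 z3 z4 (2 * c + 3) j =
      if j = 2 * c + 1 then z1 * z4 else if j = 2 * c + 2 then -(z2 * z4)
      else if j = 2 * c + 3 then z1 * z4 else 0 := by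
  unfold phiN
  rw [if_neg (by omega), if_neg (by omega), if_neg (by omega)]
  rfl

theorem psi_even {R : Type*} [CommRing R] (z1 z2 z3 z4 : R) (c j : ℕ) :
    psiN z1 z2 z3 z4 (2 * c + 2) j =
      if j = 2 * c + 2 then z1 * z4 else if j = 2 * c + 1 then z1 * z3
      else if j = 2 * c then z1 * z4 else 0 := by
  unfold psiN
  rw [if_neg (by omega), if_pos (by omega)]
  rfl

theorem psi_odd {R : Type*} [CommRing R] (z1 z2 z3 z4 : R) (c j : ℕ) :
    psiN z1 z2 z3 z4 (2 * c + 1) j =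
      if j = 2 * c + 1 then z2 * z3 else if j = 2 * c then z2 * z4 else 0 := by
  unfold psiN
  rw [if_neg (by omega), if_neg (by omega)]
  rfl

theorem psi_odd' {R : Type*} [CommRing R] (z1 z2 z3 z4 : R) (c j : ℕ) :
    psiN z1 z2 z3 z4 (2 * c + 3) j =
      if j = 2 * c + 3 then z2 * z3 else if j = 2 * c + 2 then z2 * z4 else 0 :=
  psi_odd z1 z2 z3 z4 (c + 1) j

theorem phi_even' {R : Type*} [CommRing R] (z1 z2 z3 z4 : R) (c j : ℕ) :
    phiN z1 z2 z3 z4 (2 * c + 4) j =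
      if j = 2 * c + 3 then -(z1 * z3) else if j = 2 * c + 4 then z2 * z3 else 0 :=
  phi_even z1 z2 z3 z4 (c + 1) j

theorem psi_even' {R : Type*} [CommRing R] (z1 z2 z3 z4 : R) (c j : ℕ) :
    psiN z1 z2 z3 z4 (2 * c + 4) j =
      if j = 2 * c + 4 then z1 * z4 else if j = 2 * c + 3 then z1 * z3
      else if j = 2 * c + 2 then z1 * z4 else 0 :=
  psi_even z1 z2 z3 z4 (c + 1) j

theorem near' (c j : ℕ) : j = 2 * c ∨ j = 2 * c + 1 ∨ j = 2 * c + 2 ∨ j = 2 * c + 3 ∨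
    j = 2 * c + 4 ∨
    (2 * c ≠ j ∧ 2 * c + 1 ≠ j ∧ 2 * c + 2 ≠ j ∧ 2 * c + 3 ≠ j ∧ 2 * c + 4 ≠ j ∧
      j ≠ 2 * c ∧ j ≠ 2 * c + 1 ∧ j ≠ 2 * c + 2 ∧ j ≠ 2 * c + 3 ∧ j ≠ 2 * c + 4) := by
  omega

theorem phi_zero {R : Type*} [CommRing R] (z1 z2 z3 z4 : R) (j : ℕ) :
    phiN z1 z2 z3 z4 0 j = if j = 0 then z3 else 0 := rfl

theorem phi_one {R : Type*} [CommRing R] (z1 z2 z3 z4 : R) (j : ℕ) :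
    phiN z1 z2 z3 z4 1 j = if j = 0 then -z4 else if j = 1 then z1 * z4 else 0 := rfl

theorem psi_zero {R : Type*} [CommRing R] (z1 z2 z3 z4 : R) (j : ℕ) :
    psiN z1 z2 z3 z4 0 j = if j = 0 then z1 * z2 * z4 else 0 := rfl

theorem psi_one {R : Type*} [CommRing R] (z1 z2 z3 z4 : R) (j : ℕ) :
    psiN z1 z2 z3 z4 1 j = if j = 1 then z2 * z3 else if j = 0 then z2 * z4 else 0 := rfl

theorem near (c j : ℕ) : j = 2 * c ∨ j = 2 * c + 1 ∨ j = 2 * c + 2 ∨ j = 2 * c + 3 ∨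
    (2 * c ≠ j ∧ 2 * c + 1 ≠ j ∧ 2 * c + 2 ≠ j ∧ 2 * c + 3 ≠ j ∧
      j ≠ 2 * c ∧ j ≠ 2 * c + 1 ∧ j ≠ 2 * c + 2 ∧ j ≠ 2 * c + 3) := by
  omega

theorem phi_far {R : Type*} [CommRing R] (z1 z2 z3 z4 : R) (i l : ℕ)
    (h1 : l ≠ i - 2) (h2 : l ≠ i - 2 + 1) (h3 : l ≠ i - 2 + 2) :
    phiN z1 z2 z3 z4 i l = 0 := by
  simp only [phiN]
  split_ifs
  all_goals first | (exfalso; omega) | rfl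

theorem psi_far {R : Type*} [CommRing R] (z1 z2 z3 z4 : R) (i l : ℕ)
    (h1 : l ≠ i - 2) (h2 : l ≠ i - 2 + 1) (h3 : l ≠ i - 2 + 2) :
    psiN z1 z2 z3 z4 i l = 0 := by
  simp only [psiN]
  split_ifs
  all_goals first | (exfalso; omega) | rfl

theorem phi_psi {R : Type*} [CommRing R] (z1 z2 z3 z4 : R) (m i j : ℕ) (hm : 3 ≤ m) (hi : i < m) :
    ∑ l ∈ Finset.range m, phiN z1 z2 z3 z4 i l * psiN z1 z2 z3 z4 l j
      = if i = j then z1 * z2 * z3 * z4 else 0 := by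
  rw [sum_three m (i - 2) (by omega) _
    (fun l h1 h2 h3 => by rw [phi_far z1 z2 z3 z4 i l h1 h2 h3, zero_mul])]
  rcases nat_cases i with rfl | rfl | ⟨c, rfl⟩ | ⟨c, rfl⟩
  · rw [show 0 - 2 = 0 from rfl]
    simp only [zero_add, phi_zero, phi_one, psi_zero, psi_one]
    rcases near 0 j with rfl | rfl | rfl | rfl | h
    all_goals simp_all [phi_even z1 z2 z3 z4 0, psi_even z1 z2 z3 z4 0]
    all_goals ring
  · rw [show 1 - 2 = 0 from rfl]
    simp only [zero_add, phi_zero, phi_one, psi_zero, psi_one]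
    rcases near 0 j with rfl | rfl | rfl | rfl | h
    all_goals simp_all [phi_even z1 z2 z3 z4 0, psi_even z1 z2 z3 z4 0]
    all_goals ring
  · rw [show 2 * c + 2 - 2 = 2 * c from rfl]
    rcases c with _ | c
    · simp only [mul_zero, zero_add, phi_zero, phi_one, psi_zero, psi_one]
      rcases near 0 j with rfl | rfl | rfl | rfl | h
      all_goals simp_all [phi_even z1 z2 z3 z4 0, psi_even z1 z2 z3 z4 0]
      all_goals first | (intro hc; exfalso; omega) | ring
    · simp only [show 2 * (c + 1) + 1 = 2 * c + 3 from rfl, show 2 * (c + 1) + 2 = 2 * c + 4 from rfl,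
        show 2 * (c + 1) = 2 * c + 2 from rfl, phi_even, psi_even, phi_odd, psi_odd', phi_even',
        psi_even']
      rcases near' c j with rfl | rfl | rfl | rfl | rfl | h
      all_goals simp_all
      all_goals first | (intro hc; exfalso; omega) | ring
  · rw [show 2 * c + 3 - 2 = 2 * c + 1 from rfl, show 2 * c + 1 + 1 = 2 * c + 2 from rfl,
      show 2 * c + 1 + 2 = 2 * c + 3 from rfl]
    simp only [phi_even, psi_even, phi_odd, psi_odd, psi_odd']
    rcases near c j with rfl | rfl | rfl | rfl | h
    all_goals simp_all
    all_goals first | (intro hc; exfalso; omega) | ring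

theorem psi_phi {R : Type*} [CommRing R] (z1 z2 z3 z4 : R) (m i j : ℕ) (hm : 3 ≤ m) (hi : i < m) :
    ∑ l ∈ Finset.range m, psiN z1 z2 z3 z4 i l * phiN z1 z2 z3 z4 l j
      = if i = j then z1 * z2 * z3 * z4 else 0 := by
  rw [sum_three m (i - 2) (by omega) _
    (fun l h1 h2 h3 => by rw [psi_far z1 z2 z3 z4 i l h1 h2 h3, zero_mul])]
  rcases nat_cases i with rfl | rfl | ⟨c, rfl⟩ | ⟨c, rfl⟩
  · rw [show 0 - 2 = 0 from rfl]
    simp only [zero_add, phi_zero, phi_one, psi_zero, psi_one]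
    rcases near 0 j with rfl | rfl | rfl | rfl | h
    all_goals simp_all [phi_even z1 z2 z3 z4 0, psi_even z1 z2 z3 z4 0]
    all_goals ring
  · rw [show 1 - 2 = 0 from rfl]
    simp only [zero_add, phi_zero, phi_one, psi_zero, psi_one]
    rcases near 0 j with rfl | rfl | rfl | rfl | h
    all_goals simp_all [phi_even z1 z2 z3 z4 0, psi_even z1 z2 z3 z4 0]
    all_goals ring
  · rw [show 2 * c + 2 - 2 = 2 * c from rfl]
    rcases c with _ | c
    · simp only [mul_zero, zero_add, phi_zero, phi_one, psi_zero, psi_one]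
      rcases near 0 j with rfl | rfl | rfl | rfl | h
      all_goals simp_all [phi_even z1 z2 z3 z4 0, psi_even z1 z2 z3 z4 0]
      all_goals first | (intro hc; exfalso; omega) | ring
    · simp only [show 2 * (c + 1) + 1 = 2 * c + 3 from rfl, show 2 * (c + 1) + 2 = 2 * c + 4 from rfl,
        show 2 * (c + 1) = 2 * c + 2 from rfl, phi_even, psi_even, phi_odd, psi_odd', phi_even',
        psi_even']
      rcases near' c j with rfl | rfl | rfl | rfl | rfl | h
      all_goals simp_all
      all_goals first | (intro hc; exfalso; omega) | ring
  · rw [show 2 * c + 3 - 2 = 2 * c + 1 from rfl, show 2 * c + 1 + 1 = 2 * c + 2 from rfl,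
      show 2 * c + 1 + 2 = 2 * c + 3 from rfl]
    simp only [phi_even, psi_even, phi_odd, psi_odd, psi_odd']
    rcases near c j with rfl | rfl | rfl | rfl | h
    all_goals simp_all
    all_goals first | (intro hc; exfalso; omega) | ring

theorem phi_diag {R : Type*} [CommRing R] (z1 z2 z3 z4 : R) (n : ℕ) :
    ∏ l ∈ Finset.range (2 * n + 1), phiN z1 z2 z3 z4 l l
      = z1 ^ n * z2 ^ n * z3 ^ (n + 1) * z4 ^ n := by
  induction n with
  | zero => simp [phiN]
  | succ n ih =>
    rw [show 2 * (n + 1) + 1 = 2 * n + 1 + 1 + 1 by ring, Finset.prod_range_succ,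
      Finset.prod_range_succ, ih]
    have e1 : phiN z1 z2 z3 z4 (2 * n + 1) (2 * n + 1) = z1 * z4 := by
      simp only [phiN]
      split_ifs
      all_goals first | (exfalso; omega) | rfl
    have e2 : phiN z1 z2 z3 z4 (2 * n + 1 + 1) (2 * n + 1 + 1) = z2 * z3 := by
      simp only [phiN]
      split_ifs
      all_goals first | (exfalso; omega) | rfl
    rw [e1, e2]; ring

/-- For `n ≥ 1`, the `(2n+1)×(2n+1)` matrix of relations `Φ₂(n)⁺` of `M₂(n)⁺` has
determinant `z₁ⁿz₂ⁿz₃ⁿ⁺¹z₄ⁿ` and is part of a matrix factorization of `F`. -/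
theorem stmt_12 {k : Type*} [Field k] (lam : k) (h0 : lam ≠ 0) (h1 : lam ≠ 1)
    (z1 z2 z3 z4 F : MvPolynomial (Fin 2) k)
    (hz1 : z1 = MvPolynomial.X 1) (hz2 : z2 = MvPolynomial.X 0)
    (hz3 : z3 = MvPolynomial.X 0 - MvPolynomial.X 1)
    (hz4 : z4 = MvPolynomial.X 0 - MvPolynomial.C lam * MvPolynomial.X 1)
    (hF : F = z1 * z2 * z3 * z4)
    (n : ℕ) (hn : 1 ≤ n)
    (Φ : Matrix (Fin (2 * n + 1)) (Fin (2 * n + 1)) (MvPolynomial (Fin 2) k))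
    (hΦ : ∀ i j : Fin (2 * n + 1), Φ i j =
      if i.val = 0 then (if j.val = 0 then z3 else 0)
      else if i.val = 1 then
        (if j.val = 0 then -z4 else if j.val = 1 then z1 * z4 else 0)
      else if i.val % 2 = 0 then
        (if j.val = i.val - 1 then -(z1 * z3)
         else if j.val = i.val then z2 * z3 else 0)
      else
        (if j.val = i.val - 2 then z1 * z4
         else if j.val = i.val - 1 then -(z2 * z4)
         else if j.val = i.val then z1 * z4 else 0)) :
    Φ.det = z1 ^ n * z2 ^ n * z3 ^ (n + 1) * z4 ^ n ∧
    ∃ Ψ : Matrix (Fin (2 * n + 1)) (Fin (2 * n + 1)) (MvPolynomial (Fin 2) k),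
      Φ * Ψ = F • (1 : Matrix (Fin (2 * n + 1)) (Fin (2 * n + 1)) (MvPolynomial (Fin 2) k)) ∧
      Ψ * Φ = F • (1 : Matrix (Fin (2 * n + 1)) (Fin (2 * n + 1)) (MvPolynomial (Fin 2) k)) := by
  have hP : ∀ i j, Φ i j = phiN z1 z2 z3 z4 i.val j.val := hΦ
  refine ⟨?_, Matrix.of fun i j => psiN z1 z2 z3 z4 i.val j.val, ?_, ?_⟩
  · rw [Matrix.det_of_lowerTriangular, ← phi_diag, Finset.prod_range]
    · exact Finset.prod_congr rfl fun i _ => hP i i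
    · intro i j hij
      have hij' : i.val < j.val := hij
      rw [hP]
      simp only [phiN]
      split_ifs
      all_goals first | (exfalso; omega) | rfl
  · ext1 i j
    have := phi_psi z1 z2 z3 z4 (2 * n + 1) i.val j.val (by omega) i.isLt
    rw [Finset.sum_range] at this
    simp only [Matrix.mul_apply, hP, Matrix.of_apply, Matrix.smul_apply, Matrix.one_apply, hF, this,
      Fin.ext_iff, smul_eq_mul, mul_ite, mul_one, mul_zero]
  · ext1 i j
    have := psi_phi z1 z2 z3 z4 (2 * n + 1) i.val j.val (by omega) i.isLt
    rw [Finset.sum_range] at this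
    simp only [Matrix.mul_apply, hP, Matrix.of_apply, Matrix.smul_apply, Matrix.one_apply, hF, this,
      Fin.ext_iff, smul_eq_mul, mul_ite, mul_one, mul_zero]
end

section
/- Fix n ≥ 1. Let Φ₂*(n)⁺ be the (2n+1)×(2n+1) lower-triangular matrix over k[X,Y], with rows and columns indexed 0,…,2n, whose only nonzero entries are: (0,0) = z₁z₄; (1,0) = −z₁z₃, (1,1) = z₂z₃; for 1 ≤ j ≤ n−1: (2j, 2j−1) = −z₂z₄, (2j, 2j) = z₁z₄, and (2j+1, 2j−1) = z₂z₃, (2j+1, 2j) = −z₁z₃, (2j+1, 2j+1) = z₂z₃; and (2n, 2n−1) = −z₂, (2n, 2n) = z₁. Then there exists a (2n+1)×(2n+1) matrix Ψ with entries in k[X,Y] such that Φ₂*(n)⁺·Ψ = Ψ·Φ₂*(n)⁺ = F·I₂ₙ₊₁. -/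
/-- A matrix with a right quasi-inverse (up to a nonzero scalar) over a domain has a two-sided one. -/
theorem aux_comm {R : Type*} [CommRing R] [IsDomain R] {N : ℕ} (A B : Matrix (Fin N) (Fin N) R)
    (F : R) (hF : F ≠ 0) (h : A * B = F • (1 : Matrix (Fin N) (Fin N) R)) :
    B * A = F • (1 : Matrix (Fin N) (Fin N) R) := by
  have hd : A.det ≠ 0 := by
    intro h0
    have := congrArg Matrix.det h
    rw [Matrix.det_mul, h0, zero_mul, Matrix.det_smul, Matrix.det_one, mul_one] at this
    exact pow_ne_zero _ hF this.symm
  have h2 : A * (B * A - F • (1 : Matrix (Fin N) (Fin N) R)) = 0 := by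
    rw [mul_sub, ← mul_assoc, h]
    simp
  have h3 : A.det • (B * A - F • (1 : Matrix (Fin N) (Fin N) R)) = 0 := by
    have := congrArg (fun M => A.adjugate * M) h2
    simpa [← mul_assoc, Matrix.adjugate_mul] using this
  exact sub_eq_zero.mp ((smul_eq_zero.mp h3).resolve_left hd)

/-- A sum over `Fin N` supported at three consecutive indices `m, m+1, m+2`. -/
theorem aux_three {R : Type*} [CommRing R] {N : ℕ} (f : ℕ → R) (m : ℕ) (hm : m + 2 < N)
    (h : ∀ j, j ≠ m → j ≠ m + 1 → j ≠ m + 2 → f j = 0) :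
    ∑ j : Fin N, f j.val = f m + f (m + 1) + f (m + 2) := by
  rw [Fin.sum_univ_eq_sum_range f N,
    ← Finset.sum_subset (s₁ := {m, m + 1, m + 2})]
  · rw [Finset.sum_insert (by simp), Finset.sum_insert (by simp), Finset.sum_singleton]
    ring
  · intro x hx
    simp only [Finset.mem_insert, Finset.mem_singleton] at hx
    rw [Finset.mem_range]
    omega
  · intro x _ hx
    simp only [Finset.mem_insert, Finset.mem_singleton, not_or] at hx
    exact h x hx.1 hx.2.1 hx.2.2

set_option maxHeartbeats 4000000 in
/-- For `n ≥ 1`, the `(2n+1)×(2n+1)` matrix of relations `Φ₂*(n)⁺` of `M₂*(n)⁺` is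
part of a matrix factorization of `F`. -/
theorem stmt_13 {k : Type*} [Field k] (lam : k) (h0 : lam ≠ 0) (h1 : lam ≠ 1)
    (z1 z2 z3 z4 F : MvPolynomial (Fin 2) k)
    (hz1 : z1 = MvPolynomial.X 1) (hz2 : z2 = MvPolynomial.X 0)
    (hz3 : z3 = MvPolynomial.X 0 - MvPolynomial.X 1)
    (hz4 : z4 = MvPolynomial.X 0 - MvPolynomial.C lam * MvPolynomial.X 1)
    (hF : F = z1 * z2 * z3 * z4)
    (n : ℕ) (hn : 1 ≤ n)
    (Φ : Matrix (Fin (2 * n + 1)) (Fin (2 * n + 1)) (MvPolynomial (Fin 2) k))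
    (hΦ : ∀ i j : Fin (2 * n + 1), Φ i j =
      if i.val = 0 then (if j.val = 0 then z1 * z4 else 0)
      else if i.val = 2 * n then
        (if j.val = i.val - 1 then -z2 else if j.val = i.val then z1 else 0)
      else if i.val % 2 = 0 then
        (if j.val = i.val - 1 then -(z2 * z4)
         else if j.val = i.val then z1 * z4 else 0)
      else
        (if i.val ≠ 1 ∧ j.val = i.val - 2 then z2 * z3
         else if j.val = i.val - 1 then -(z1 * z3)
         else if j.val = i.val then z2 * z3 else 0)) :
    ∃ Ψ : Matrix (Fin (2 * n + 1)) (Fin (2 * n + 1)) (MvPolynomial (Fin 2) k),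
      Φ * Ψ = F • (1 : Matrix (Fin (2 * n + 1)) (Fin (2 * n + 1)) (MvPolynomial (Fin 2) k)) ∧
      Ψ * Φ = F • (1 : Matrix (Fin (2 * n + 1)) (Fin (2 * n + 1)) (MvPolynomial (Fin 2) k)) := by
  have hF0 : F ≠ 0 := by
    have e1 : z1 ≠ 0 := by rw [hz1]; exact MvPolynomial.X_ne_zero _
    have e2 : z2 ≠ 0 := by rw [hz2]; exact MvPolynomial.X_ne_zero _
    have e3 : z3 ≠ 0 := by
      intro h
      have := congrArg (MvPolynomial.eval ![(1 : k), 0]) h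
      simp [hz3] at this
    have e4 : z4 ≠ 0 := by
      intro h
      have := congrArg (MvPolynomial.eval ![(1 : k), 0]) h
      simp [hz4] at this
    rw [hF]
    exact mul_ne_zero (mul_ne_zero (mul_ne_zero e1 e2) e3) e4
  obtain ⟨ψ, hψ⟩ : ∃ ψ : ℕ → ℕ → MvPolynomial (Fin 2) k, ∀ i c, ψ i c =
      if c = 2 * n then (if i = c then z2 * z3 * z4 else 0)
      else if c % 2 = 0 then
        (if i = c then z2 * z3 else if i = c + 1 then z1 * z3
          else if i = c + 2 then z2 * z3 else 0)
      else (if i = c then z1 * z4 else if i = c + 1 then z2 * z4 else 0) :=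
    ⟨_, fun _ _ => rfl⟩
  obtain ⟨φ, hφ⟩ : ∃ φ : ℕ → ℕ → MvPolynomial (Fin 2) k, ∀ i j, φ i j =
      if i = 0 then (if j = 0 then z1 * z4 else 0)
      else if i = 2 * n then
        (if j = i - 1 then -z2 else if j = i then z1 else 0)
      else if i % 2 = 0 then
        (if j = i - 1 then -(z2 * z4)
         else if j = i then z1 * z4 else 0)
      else
        (if i ≠ 1 ∧ j = i - 2 then z2 * z3
         else if j = i - 1 then -(z1 * z3)
         else if j = i then z2 * z3 else 0) :=
    ⟨_, fun _ _ => rfl⟩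
  have hΦφ : ∀ i j, Φ i j = φ i.val j.val := fun i j => by rw [hΦ, hφ]
  have key : Φ * (Matrix.of fun i j : Fin (2 * n + 1) => ψ i.val j.val) =
      F • (1 : Matrix (Fin (2 * n + 1)) (Fin (2 * n + 1)) (MvPolynomial (Fin 2) k)) := by
    ext1 i c
    rw [Matrix.mul_apply, Matrix.smul_apply, Matrix.one_apply, smul_eq_mul, mul_ite, mul_one,
      mul_zero]
    simp only [Matrix.of_apply, hΦφ, Fin.ext_iff]
    obtain ⟨i, hi⟩ := i
    obtain ⟨c, hc⟩ := c
    dsimp only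
    obtain ⟨m, hm, hmi⟩ : ∃ m, m + 2 < 2 * n + 1 ∧ ((m = 0 ∧ i ≤ 1) ∨ i = m + 2) := by
      by_cases h : i ≤ 1
      · exact ⟨0, by omega, Or.inl ⟨rfl, h⟩⟩
      · exact ⟨i - 2, by omega, Or.inr (by omega)⟩
    rw [aux_three (fun j => φ i j * ψ j c) m hm]
    · have key1 : i = 0 ∨ i = 1 ∨ i = m + 2 := by omega
      rcases key1 with h | h | h
      · have hm0 : m = 0 := by omega
        subst h hm0
        have a0 : φ 0 0 = z1 * z4 := by rw [hφ]; simp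
        have a1 : φ 0 1 = 0 := by rw [hφ]; simp
        have a2 : φ 0 2 = 0 := by rw [hφ]; simp
        simp only [zero_add, a0, a1, a2, hψ, hF]
        split_ifs <;> first | contradiction | omega | ring
      · have hm0 : m = 0 := by omega
        subst h hm0
        have h2n : 1 ≠ 2 * n := by omega
        have a0 : φ 1 0 = -(z1 * z3) := by rw [hφ]; simp [h2n]
        have a1 : φ 1 1 = z2 * z3 := by rw [hφ]; simp [h2n]
        have a2 : φ 1 2 = 0 := by rw [hφ]; simp [h2n]
        simp only [zero_add, a0, a1, a2, hψ, hF]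
        split_ifs <;> first | contradiction | omega | ring
      · subst h
        by_cases hl : m + 2 = 2 * n
        · have a0 : φ (m + 2) m = 0 := by
            rw [hφ, if_neg (by omega), if_pos hl, if_neg (by omega), if_neg (by omega)]
          have a1 : φ (m + 2) (m + 1) = -z2 := by
            rw [hφ, if_neg (by omega), if_pos hl, if_pos (by omega)]
          have a2 : φ (m + 2) (m + 2) = z1 := by
            rw [hφ, if_neg (by omega), if_pos hl, if_neg (by omega), if_pos rfl]
          simp only [a0, a1, a2, hψ, hF]
          split_ifs <;> first | contradiction | omega | ring
        · by_cases he : (m + 2) % 2 = 0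
          · have a0 : φ (m + 2) m = 0 := by
              rw [hφ, if_neg (by omega), if_neg hl, if_pos he, if_neg (by omega),
                if_neg (by omega)]
            have a1 : φ (m + 2) (m + 1) = -(z2 * z4) := by
              rw [hφ, if_neg (by omega), if_neg hl, if_pos he, if_pos (by omega)]
            have a2 : φ (m + 2) (m + 2) = z1 * z4 := by
              rw [hφ, if_neg (by omega), if_neg hl, if_pos he, if_neg (by omega), if_pos rfl]
            simp only [a0, a1, a2, hψ, hF]
            split_ifs <;> first | contradiction | omega | ring
          · have a0 : φ (m + 2) m = z2 * z3 := by
              rw [hφ, if_neg (by omega), if_neg hl, if_neg he, if_pos (by omega)]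
            have a1 : φ (m + 2) (m + 1) = -(z1 * z3) := by
              rw [hφ, if_neg (by omega), if_neg hl, if_neg he, if_neg (by omega),
                if_pos (by omega)]
            have a2 : φ (m + 2) (m + 2) = z2 * z3 := by
              rw [hφ, if_neg (by omega), if_neg hl, if_neg he, if_neg (by omega),
                if_neg (by omega), if_pos rfl]
            simp only [a0, a1, a2, hψ, hF]
            split_ifs <;> first | contradiction | omega | ring
    · intro j hj0 hj1 hj2
      have : φ i j = 0 := by
        rw [hφ]
        split_ifs <;> first | rfl | omega
      simp only [this, zero_mul]
  exact ⟨_, key, aux_comm _ _ F hF0 key⟩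
end

section
/- Fix n ≥ 0. Let Φ₃(n)⁺ be the (2n+3)×(2n+3) lower-triangular matrix over k[X,Y], with rows and columns indexed 0,…,2n+2, whose only nonzero entries are: (0,0) = z₂z₃; for 0 ≤ j ≤ n: (2j+1, 2j) = −z₂z₄, (2j+1, 2j+1) = z₁z₄; for 1 ≤ j ≤ n: (2j, 2j−2) = z₂z₃, (2j, 2j−1) = −z₁z₃, (2j, 2j) = z₂z₃; and (2n+2, 2n) = z₂z₃, (2n+2, 2n+1) = −z₁z₃, (2n+2, 2n+2) = z₁z₂z₃. Then there exists a (2n+3)×(2n+3) matrix Ψ with entries in k[X,Y] such that Φ₃(n)⁺·Ψ = Ψ·Φ₃(n)⁺ = F·I₂ₙ₊₃. -/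
theorem aux_sum3 {R : Type*} [CommRing R] {N : ℕ} (g v : Fin N → R) (a b c : Fin N) (A B C : R)
    (hab : a ≠ b) (hac : a ≠ c) (hbc : b ≠ c)
    (hg : ∀ l, g l = if l = a then A else if l = b then B else if l = c then C else 0) :
    ∑ l, g l * v l = A * v a + B * v b + C * v c := by
  have : ∀ l, g l * v l = (if l = a then A * v l else 0) + (if l = b then B * v l else 0)
      + (if l = c then C * v l else 0) := by
    intro l
    rw [hg]
    split_ifs <;> simp_all
  simp [this, Finset.sum_add_distrib]

theorem aux_sum2 {R : Type*} [CommRing R] {N : ℕ} (g v : Fin N → R) (a b : Fin N) (A B : R)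
    (hab : a ≠ b)
    (hg : ∀ l, g l = if l = a then A else if l = b then B else 0) :
    ∑ l, g l * v l = A * v a + B * v b := by
  have : ∀ l, g l * v l = (if l = a then A * v l else 0) + (if l = b then B * v l else 0) := by
    intro l
    rw [hg]
    split_ifs <;> simp_all
  simp [this, Finset.sum_add_distrib]

/-- Entries of the complementary factor. -/
def auxPsi {R : Type*} [CommRing R] (z1 z2 z3 z4 : R) (n i j : ℕ) : R :=
  if j = 2 * n + 2 then (if i = j then z4 else 0)
  else if j % 2 = 0 then
    (if i = j then z1 * z4 else if i = j + 1 then z2 * z4 else 0)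
  else
    (if i = j then z2 * z3
     else if i = j + 1 then (if i = 2 * n + 2 then z3 else z1 * z3)
     else if i = j + 2 then z2 * z3 else 0)

theorem aux_zero {R : Type*} [CommRing R] (z1 z2 z3 z4 : R) (n j : ℕ) :
    z2 * z3 * auxPsi z1 z2 z3 z4 n 0 j + 0 * auxPsi z1 z2 z3 z4 n 1 j =
      if 0 = j then z1 * z2 * z3 * z4 else 0 := by
  simp only [auxPsi]
  split_ifs <;> first | contradiction | omega | ring

set_option maxHeartbeats 4000000 in
theorem aux_odd {R : Type*} [CommRing R] (z1 z2 z3 z4 : R) (n m j : ℕ) (hm : m ≤ n)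
    (hj : j < 2 * n + 3) :
    -(z2 * z4) * auxPsi z1 z2 z3 z4 n (2 * m) j + z1 * z4 * auxPsi z1 z2 z3 z4 n (2 * m + 1) j =
      if 2 * m + 1 = j then z1 * z2 * z3 * z4 else 0 := by
  simp only [auxPsi]
  split_ifs <;> first | contradiction | omega | ring

set_option maxHeartbeats 4000000 in
theorem aux_even {R : Type*} [CommRing R] (z1 z2 z3 z4 : R) (n m j : ℕ) (hm : m ≤ n)
    (hj : j < 2 * n + 3) :
    z2 * z3 * auxPsi z1 z2 z3 z4 n (2 * m) j + -(z1 * z3) * auxPsi z1 z2 z3 z4 n (2 * m + 1) j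
      + (if 2 * m + 2 = 2 * n + 2 then z1 * z2 * z3 else z2 * z3)
        * auxPsi z1 z2 z3 z4 n (2 * m + 2) j =
      if 2 * m + 2 = j then z1 * z2 * z3 * z4 else 0 := by
  simp only [auxPsi]
  split_ifs <;> first | contradiction | omega | ring

set_option maxHeartbeats 4000000 in
/-- For `n ≥ 0`, the `(2n+3)×(2n+3)` matrix of relations `Φ₃(n)⁺` of `M₃(n)⁺` is
part of a matrix factorization of `F`. -/
theorem stmt_14 {k : Type*} [Field k] (lam : k) (h0 : lam ≠ 0) (h1 : lam ≠ 1)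
    (z1 z2 z3 z4 F : MvPolynomial (Fin 2) k)
    (hz1 : z1 = MvPolynomial.X 1) (hz2 : z2 = MvPolynomial.X 0)
    (hz3 : z3 = MvPolynomial.X 0 - MvPolynomial.X 1)
    (hz4 : z4 = MvPolynomial.X 0 - MvPolynomial.C lam * MvPolynomial.X 1)
    (hF : F = z1 * z2 * z3 * z4)
    (n : ℕ)
    (Φ : Matrix (Fin (2 * n + 3)) (Fin (2 * n + 3)) (MvPolynomial (Fin 2) k))
    (hΦ : ∀ i j : Fin (2 * n + 3), Φ i j =
      if i.val = 0 then (if j.val = 0 then z2 * z3 else 0)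
      else if i.val % 2 = 1 then
        (if j.val = i.val - 1 then -(z2 * z4)
         else if j.val = i.val then z1 * z4 else 0)
      else if i.val = 2 * n + 2 then
        (if j.val = i.val - 2 then z2 * z3
         else if j.val = i.val - 1 then -(z1 * z3)
         else if j.val = i.val then z1 * z2 * z3 else 0)
      else
        (if j.val = i.val - 2 then z2 * z3
         else if j.val = i.val - 1 then -(z1 * z3)
         else if j.val = i.val then z2 * z3 else 0)) :
    ∃ Ψ : Matrix (Fin (2 * n + 3)) (Fin (2 * n + 3)) (MvPolynomial (Fin 2) k),
      Φ * Ψ = F • (1 : Matrix (Fin (2 * n + 3)) (Fin (2 * n + 3)) (MvPolynomial (Fin 2) k)) ∧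
      Ψ * Φ = F • (1 : Matrix (Fin (2 * n + 3)) (Fin (2 * n + 3)) (MvPolynomial (Fin 2) k)) := by
  have hF0 : F ≠ 0 := by
    have e1 : z1 ≠ 0 := by rw [hz1]; exact MvPolynomial.X_ne_zero _
    have e2 : z2 ≠ 0 := by rw [hz2]; exact MvPolynomial.X_ne_zero _
    have e3 : z3 ≠ 0 := by
      intro h
      have := congrArg (MvPolynomial.eval ![1, 0]) h
      simp [hz3] at this
    have e4 : z4 ≠ 0 := by
      intro h
      have := congrArg (MvPolynomial.eval ![1, 0]) h
      simp [hz4] at this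
    rw [hF]
    exact mul_ne_zero (mul_ne_zero (mul_ne_zero e1 e2) e3) e4
  clear hz1 hz2 hz3 hz4
  have key : Φ * (Matrix.of fun i j => auxPsi z1 z2 z3 z4 n i.val j.val) =
      F • (1 : Matrix (Fin (2 * n + 3)) (Fin (2 * n + 3)) (MvPolynomial (Fin 2) k)) := by
    ext1 i j
    obtain ⟨j, hj⟩ := j
    obtain ⟨i, hi⟩ := i
    simp only [Matrix.mul_apply, Matrix.smul_apply, Matrix.one_apply, Matrix.of_apply,
      smul_eq_mul, mul_ite, mul_one, mul_zero, Fin.mk.injEq]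
    rw [hF]
    have hcases : i = 0 ∨ (∃ m, i = 2 * m + 1) ∨ (∃ m, i = 2 * m + 2) := by
      rcases Nat.eq_zero_or_pos i with h | h
      · exact Or.inl h
      · rcases Nat.mod_two_eq_zero_or_one i with h2 | h2
        · exact Or.inr (Or.inr ⟨i / 2 - 1, by omega⟩)
        · exact Or.inr (Or.inl ⟨i / 2, by omega⟩)
    rcases hcases with h | ⟨m, h⟩ | ⟨m, h⟩
    · subst h
      rw [aux_sum2 (fun l => Φ ⟨0, hi⟩ l) _ ⟨0, hi⟩ ⟨1, by omega⟩ (z2 * z3) 0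
        (by rw [Ne, Fin.mk.injEq]; omega)
        (by intro l; simp only [hΦ, Fin.ext_iff]; split_ifs <;> first | contradiction | omega | rfl)]
      exact aux_zero z1 z2 z3 z4 n j
    · subst h
      rw [aux_sum2 (fun l => Φ ⟨2 * m + 1, hi⟩ l) _ ⟨2 * m, by omega⟩ ⟨2 * m + 1, hi⟩
        (-(z2 * z4)) (z1 * z4) (by rw [Ne, Fin.mk.injEq]; omega)
        (by intro l; simp only [hΦ, Fin.ext_iff]; split_ifs <;> first | contradiction | omega | rfl)]
      exact aux_odd z1 z2 z3 z4 n m j (by omega) hj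
    · subst h
      rw [aux_sum3 (fun l => Φ ⟨2 * m + 2, hi⟩ l) _ ⟨2 * m, by omega⟩ ⟨2 * m + 1, by omega⟩
        ⟨2 * m + 2, hi⟩
        (z2 * z3) (-(z1 * z3)) (if 2 * m + 2 = 2 * n + 2 then z1 * z2 * z3 else z2 * z3)
        (by rw [Ne, Fin.mk.injEq]; omega) (by rw [Ne, Fin.mk.injEq]; omega)
        (by rw [Ne, Fin.mk.injEq]; omega)
        (by intro l; simp only [hΦ, Fin.ext_iff]; split_ifs <;> first | contradiction | omega | rfl)]
      exact aux_even z1 z2 z3 z4 n m j (by omega) hj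
  exact ⟨_, key, aux_comm _ _ F hF0 key⟩
end

section
/- Fix s ≥ 1. Let A be the 2s×2s lower-triangular matrix over k[X,Y], with rows and columns indexed 0,…,2s−1, defined for j ≤ i by: A(i,j) = z₂z₄ if i and j are both even; A(i,j) = −z₁z₄ if i is even and j is odd; A(i,j) = −z₂z₃ if i is odd and j is even; A(i,j) = z₁z₃ if i and j are both odd; and A(i,j) = 0 for j > i. Then there exists a 2s×2s matrix Ψ with entries in k[X,Y] such that A·Ψ = Ψ·A = F·I₂ₛ. -/
open Matrix in
lemma aux_LT {R : Type*} [CommRing R] (n : ℕ) :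
    (Matrix.of fun i j : Fin n => if j.val ≤ i.val then (1 : R) else 0) *
      (Matrix.of fun i j : Fin n => (if i = j then (1 : R) else 0) -
        (if i.val = j.val + 1 then (1 : R) else 0)) = 1 := by
  ext i j
  simp only [Matrix.mul_apply, Matrix.of_apply, mul_sub, Finset.sum_sub_distrib, mul_ite,
    mul_one, mul_zero, Finset.sum_ite_eq', Finset.mem_univ, if_true, Matrix.one_apply]
  have h2 : (∑ x : Fin n, if x.val = j.val + 1 then (if x.val ≤ i.val then (1 : R) else 0) else 0)
      = if j.val + 1 ≤ i.val then 1 else 0 := by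
    by_cases hj : j.val + 1 < n
    · rw [Finset.sum_eq_single (⟨j.val + 1, hj⟩ : Fin n)]
      · simp
      · intro b _ hb
        rw [if_neg]
        intro h
        exact hb (Fin.ext h)
      · simp
    · rw [Finset.sum_eq_zero, if_neg]
      · omega
      · intro x _
        rw [if_neg]
        omega
  simp only [h2, Fin.ext_iff]
  split_ifs <;> first | omega | simp

/-- For `s ≥ 1`, the `2s×2s` lower-triangular matrix `A` with `A(i,j) = z₂z₄`
(`i,j` even), `−z₁z₄` (`i` even, `j` odd), `−z₂z₃` (`i` odd, `j` even), `z₁z₃`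
(`i,j` odd) for `j ≤ i`, and `0` for `j > i`, is part of a matrix factorization
of `F`: there is `Ψ` with `AΨ = ΨA = F·I₂ₛ`. -/
theorem stmt_19 {k : Type*} [Field k] (lam : k) (h0 : lam ≠ 0) (h1 : lam ≠ 1)
    (z1 z2 z3 z4 F : MvPolynomial (Fin 2) k)
    (hz1 : z1 = MvPolynomial.X 1) (hz2 : z2 = MvPolynomial.X 0)
    (hz3 : z3 = MvPolynomial.X 0 - MvPolynomial.X 1)
    (hz4 : z4 = MvPolynomial.X 0 - MvPolynomial.C lam * MvPolynomial.X 1)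
    (hF : F = z1 * z2 * z3 * z4)
    (s : ℕ) (hs : 1 ≤ s)
    (A : Matrix (Fin (2 * s)) (Fin (2 * s)) (MvPolynomial (Fin 2) k))
    (hA : ∀ i j : Fin (2 * s), A i j =
      if j.val ≤ i.val then
        (if i.val % 2 = 0 then
          (if j.val % 2 = 0 then z2 * z4 else -(z1 * z4))
        else
          (if j.val % 2 = 0 then -(z2 * z3) else z1 * z3))
      else 0) :
    ∃ Ψ : Matrix (Fin (2 * s)) (Fin (2 * s)) (MvPolynomial (Fin 2) k),
      A * Ψ = F • (1 : Matrix (Fin (2 * s)) (Fin (2 * s)) (MvPolynomial (Fin 2) k)) ∧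
      Ψ * A = F • (1 : Matrix (Fin (2 * s)) (Fin (2 * s)) (MvPolynomial (Fin 2) k)) := by
  obtain ⟨r, hr⟩ : ∃ r : Fin (2 * s) → MvPolynomial (Fin 2) k,
    r = fun i : Fin (2 * s) => if i.val % 2 = 0 then z4 else -z3 := ⟨_, rfl⟩
  obtain ⟨r', hr'⟩ : ∃ r : Fin (2 * s) → MvPolynomial (Fin 2) k,
    r = fun i : Fin (2 * s) => if i.val % 2 = 0 then z3 else -z4 := ⟨_, rfl⟩
  obtain ⟨c, hc⟩ : ∃ r : Fin (2 * s) → MvPolynomial (Fin 2) k,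
    r = fun i : Fin (2 * s) => if i.val % 2 = 0 then z2 else -z1 := ⟨_, rfl⟩
  obtain ⟨c', hc'⟩ : ∃ r : Fin (2 * s) → MvPolynomial (Fin 2) k,
    r = fun i : Fin (2 * s) => if i.val % 2 = 0 then z1 else -z2 := ⟨_, rfl⟩
  have hLT := aux_LT (R := MvPolynomial (Fin 2) k) (2 * s)
  obtain ⟨L, hL⟩ : ∃ L : Matrix (Fin (2 * s)) (Fin (2 * s)) (MvPolynomial (Fin 2) k),
    L = Matrix.of fun i j : Fin (2 * s) => if j.val ≤ i.val then 1 else 0 := ⟨_, rfl⟩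
  rw [← hL] at hLT
  generalize (Matrix.of fun i j : Fin (2 * s) =>
    (if i = j then (1 : MvPolynomial (Fin 2) k) else 0) -
        (if i.val = j.val + 1 then 1 else 0)) = T at hLT
  have hTL : T * L = 1 := mul_eq_one_comm.mp hLT
  have hAe : A = Matrix.diagonal r * L * Matrix.diagonal c := by
    ext1 i j
    rw [hA, Matrix.mul_diagonal, Matrix.diagonal_mul, hL, hr, hc]
    simp only [Matrix.of_apply]
    split_ifs <;> ring
  have hrr : Matrix.diagonal r * Matrix.diagonal r' = (z3 * z4) • 1 := by
    rw [Matrix.diagonal_mul_diagonal, Matrix.smul_one_eq_diagonal, hr, hr']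
    congr 1; funext i
    dsimp only
    split_ifs <;> ring
  have hcc : Matrix.diagonal c * Matrix.diagonal c' = (z1 * z2) • 1 := by
    rw [Matrix.diagonal_mul_diagonal, Matrix.smul_one_eq_diagonal, hc, hc']
    congr 1; funext i
    dsimp only
    split_ifs <;> ring
  have hrr2 : Matrix.diagonal r' * Matrix.diagonal r = (z3 * z4) • 1 := by
    rw [← hrr, Matrix.diagonal_mul_diagonal, Matrix.diagonal_mul_diagonal]
    simp only [mul_comm]
  have hcc2 : Matrix.diagonal c' * Matrix.diagonal c = (z1 * z2) • 1 := by
    rw [← hcc, Matrix.diagonal_mul_diagonal, Matrix.diagonal_mul_diagonal]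
    simp only [mul_comm]
  refine ⟨Matrix.diagonal c' * T * Matrix.diagonal r', ?_, ?_⟩
  · calc A * (Matrix.diagonal c' * T * Matrix.diagonal r')
        = Matrix.diagonal r * (L * ((Matrix.diagonal c * Matrix.diagonal c') * T)) *
            Matrix.diagonal r' := by rw [hAe]; simp only [Matrix.mul_assoc]
      _ = F • 1 := by
        rw [hcc, Matrix.smul_mul, Matrix.one_mul, Matrix.mul_smul, hLT, Matrix.mul_smul,
          Matrix.mul_one, Matrix.smul_mul, hrr, smul_smul, hF]
        congr 1; ring
  · calc Matrix.diagonal c' * T * Matrix.diagonal r' * A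
        = Matrix.diagonal c' * (T * ((Matrix.diagonal r' * Matrix.diagonal r) * L)) *
            Matrix.diagonal c := by rw [hAe]; simp only [Matrix.mul_assoc]
      _ = F • 1 := by
        rw [hrr2, Matrix.smul_mul, Matrix.one_mul, Matrix.mul_smul, hTL, Matrix.mul_smul,
          Matrix.mul_one, Matrix.smul_mul, hcc2, smul_smul, hF]
        congr 1; ring
end
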